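/- arXiv:0911.3565 — 2 statements merged into one kernel-verified Lean document; each statement's English description precedes it below -/
import Mathlib

section
/- Let λ ∈ K∖{0,1} satisfy λ^2 − λ + 1 ≠ 0, and let L_λ = y_2^2 y_3 − y_1(y_1 − y_3)(y_1 − λy_3) ∈ K[y_1,y_2,y_3]. Then Ann_R(L_λ) = (x_1x_2, H_1, H_2), where H_1 = λ^2x_1^2 + λ(1+λ)x_1x_3 + (λ^2−λ+1)x_3^2 and H_2 = λ^2x_2^2 + λx_1x_3 + (1+λ)x_3^2; in particular this ideal is a complete intersection and R/Ann_R(L_λ) has Hilbert function {1,3,3,1}. -/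
/-- The contraction (derivative) action of the power series ring
`R = K[[x_1,…,x_n]]` on the polynomial ring `P = K[y_1,…,y_n]`:
`f ∘ g = f(∂/∂y_1, …, ∂/∂y_n)(g)`.  It is defined on the monomial basis by
`x^α ∘ y^β = (∏ i, (β i)!/(β i - α i)!) y^(β-α)` (zero unless `α ≤ β`), the honest
iterated partial derivative, and extended `K`-linearly. -/
noncomputable def contract {K : Type*} [Field K] {n : ℕ} (f : MvPowerSeries (Fin n) K) :
    MvPolynomial (Fin n) K →ₗ[K] MvPolynomial (Fin n) K :=
  (MvPolynomial.basisMonomials (Fin n) K).constr K fun β =>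
    ∑ α ∈ Finset.Iic β,
      (MvPowerSeries.coeff α f * ∏ i, ((β i).descFactorial (α i) : K)) •
        MvPolynomial.monomial (β - α) (1 : K)

theorem contract_add {K : Type*} [Field K] {n : ℕ} (f g : MvPowerSeries (Fin n) K) :
    contract (f + g) = contract f + contract g := by
  unfold contract
  rw [← map_add]
  congr 1
  funext β
  simp only [Pi.add_apply]
  rw [← Finset.sum_add_distrib]
  exact Finset.sum_congr rfl fun α _ => by rw [map_add, add_mul, add_smul]

theorem contract_zero {K : Type*} [Field K] {n : ℕ} :
    contract (0 : MvPowerSeries (Fin n) K) = 0 := by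
  unfold contract
  convert map_zero ((MvPolynomial.basisMonomials (Fin n) K).constr
    (M' := MvPolynomial (Fin n) K) K) using 2
  funext β
  simp

/-- The annihilator `Ann_R(F) = Ann_R(⟨F⟩_R)` of (the cyclic `R`-submodule of
`P` generated by) a polynomial `F` under the contraction action; an ideal of
`R = K[[x_1,…,x_n]]`.  The Artinian Gorenstein local algebra associated to `F`
is `A_F = R ⧸ annR F`. -/
noncomputable def annR {K : Type*} [Field K] {n : ℕ} (F : MvPolynomial (Fin n) K) :
    Ideal (MvPowerSeries (Fin n) K) where
  carrier := {f | ∀ u : MvPowerSeries (Fin n) K, contract (u * f) F = 0}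
  zero_mem' := fun u => by rw [mul_zero, contract_zero]; rfl
  add_mem' := fun {a b} ha hb u => by
    rw [mul_add, contract_add, LinearMap.add_apply, ha u, hb u, add_zero]
  smul_mem' := fun c f hf u => by
    rw [smul_eq_mul, ← mul_assoc]; exact hf (u * c)

/-- The maximal ideal `M = (x_1, …, x_n)` of `R = K[[x_1,…,x_n]]`,
i.e. the ideal of power series with zero constant term. -/
noncomputable def mxR (K : Type*) [Field K] (n : ℕ) : Ideal (MvPowerSeries (Fin n) K) :=
  RingHom.ker (MvPowerSeries.constantCoeff (σ := Fin n) (R := K))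

/-- The Hilbert function of `A = R/I` where `R = K[[x_1,…,x_n]]`:
`HF_A(i) = dim_K (m^i/m^(i+1)) = dim_K A/m^(i+1) - dim_K A/m^i`, computed via
`A/m^j = R/(I + M^j)` where `M = (x_1,…,x_n)`. -/
noncomputable def hilbQ {K : Type*} [Field K] {n : ℕ}
    (I : Ideal (MvPowerSeries (Fin n) K)) (i : ℕ) : ℕ :=
  Module.finrank K (MvPowerSeries (Fin n) K ⧸ (I ⊔ mxR K n ^ (i + 1))) -
    Module.finrank K (MvPowerSeries (Fin n) K ⧸ (I ⊔ mxR K n ^ i))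

/-- The variable `x_i` of `R = K[[x_1,…,x_n]]`. -/
noncomputable def psX {K : Type*} [Field K] {n : ℕ} (i : Fin n) :
    MvPowerSeries (Fin n) K := MvPowerSeries.X i

/-- The Legendre cubic `L_λ = y_2^2 y_3 - y_1(y_1 - y_3)(y_1 - λ y_3)`. -/
noncomputable def legendreCubic {K : Type*} [Field K] (lam : K) :
    MvPolynomial (Fin 3) K :=
  MvPolynomial.X 1 ^ 2 * MvPolynomial.X 2 -
    MvPolynomial.X 0 * (MvPolynomial.X 0 - MvPolynomial.X 2) *
      (MvPolynomial.X 0 - MvPolynomial.C lam * MvPolynomial.X 2)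

/-- `H_1 = λ^2 x_1^2 + λ(1+λ) x_1 x_3 + (λ^2-λ+1) x_3^2`. -/
noncomputable def legH1 {K : Type*} [Field K] (lam : K) : MvPowerSeries (Fin 3) K :=
  lam ^ 2 • psX 0 ^ 2 + (lam * (1 + lam)) • (psX 0 * psX 2) +
    (lam ^ 2 - lam + 1) • psX 2 ^ 2

/-- `H_2 = λ^2 x_2^2 + λ x_1 x_3 + (1+λ) x_3^2`. -/
noncomputable def legH2 {K : Type*} [Field K] (lam : K) : MvPowerSeries (Fin 3) K :=
  lam ^ 2 • psX 1 ^ 2 + lam • (psX 0 * psX 2) + (1 + lam) • psX 2 ^ 2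

/-!
The action of `R` on polynomials sends products to composites, so `(f, g) ↦ ((fg) ∘ F)(0)` is a
pairing on `R ⧸ annR F`.  For `F = L_λ`, each of `x₁x₂`, `H₁`, `H₂` annihilates `F`, and modulo the
ideal `J` they generate, multiplying a monomial of degree `k` among
`1, x₁, x₂, x₃, x₂², x₂x₃, x₃², x₂²x₃` by a variable lands in the ideal of those of degree `k + 1`.
Hence these eight monomials span `R ⧸ J`.  Up to nonzero scalars the list is dual to its own
reversal under the pairing, so the monomials stay independent modulo `annR F`; this forces
`annR F = J`, and the Hilbert function counts the monomials in each degree.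

For regularity, if `x₁` is a nonzerodivisor modulo `I`, then an element that is one modulo
`I + (x₁)` and modulo `I + (x₂)` is one modulo `I + (x₁x₂)`.  The resulting conditions modulo `H₁`
are checked by an exchange: if `a` is a nonzerodivisor modulo `I` and `b` modulo `I + (a)`, then `a`
is one modulo `I + (b)`.  What remains is that, modulo suitable linear forms, `H₁` and `H₂` are
nonzero multiples of squares or products of linear forms.
-/

open MvPowerSeries

section Contraction

variable {K : Type*} [Field K] {n : ℕ}

lemma contract_monomial (f : MvPowerSeries (Fin n) K) (β : Fin n →₀ ℕ) :
    contract f (MvPolynomial.monomial β 1) =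
      ∑ α ∈ Finset.Iic β, (coeff α f * ∏ i, ((β i).descFactorial (α i) : K)) •
        MvPolynomial.monomial (β - α) (1 : K) := by
  have basis_apply : MvPolynomial.monomial β (1 : K) =
      MvPolynomial.basisMonomials (Fin n) K β := by
    rw [MvPolynomial.coe_basisMonomials]
  rw [basis_apply, contract, Module.Basis.constr_basis]

lemma contract_smul (c : K) (f : MvPowerSeries (Fin n) K) :
    contract (c • f) = c • contract f := by
  refine (MvPolynomial.basisMonomials (Fin n) K).ext fun β => ?_
  simp only [MvPolynomial.coe_basisMonomials, LinearMap.smul_apply, contract_monomial,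
    Finset.smul_sum, smul_smul, coeff_smul, mul_assoc]

lemma contract_one : contract (1 : MvPowerSeries (Fin n) K) = LinearMap.id := by
  classical
  refine (MvPolynomial.basisMonomials (Fin n) K).ext fun β => ?_
  rw [MvPolynomial.coe_basisMonomials, contract_monomial, Finset.sum_eq_single 0]
  · simp
  · intro α _ hα
    simp [coeff_one, hα]
  · simp

lemma prod_descFactorial_add (β α₁ α₂ : Fin n →₀ ℕ) :
    ∏ i, ((β i).descFactorial ((α₁ + α₂) i) : K) =
      (∏ i, ((β i).descFactorial (α₂ i) : K)) *
        ∏ i, (((β - α₂) i).descFactorial (α₁ i) : K) := by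
  rw [← Finset.prod_mul_distrib]
  refine Finset.prod_congr rfl fun i _ => ?_
  rw [← Nat.cast_mul, Finsupp.add_apply, Finsupp.tsub_apply,
    ← Nat.descFactorial_mul_descFactorial (Nat.le_add_left (α₂ i) (α₁ i)),
    Nat.add_sub_cancel_right, mul_comm]

lemma contract_mul (f g : MvPowerSeries (Fin n) K) :
    contract (f * g) = contract f ∘ₗ contract g := by
  classical
  refine (MvPolynomial.basisMonomials (Fin n) K).ext fun β => ?_
  rw [MvPolynomial.coe_basisMonomials, LinearMap.comp_apply, contract_monomial,
    contract_monomial, map_sum]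
  simp only [map_smul, contract_monomial, coeff_mul, Finset.sum_mul, Finset.sum_smul,
    Finset.smul_sum, smul_smul]
  rw [Finset.sum_sigma', Finset.sum_sigma']
  refine Finset.sum_bij' (fun p _ => ⟨p.2.2, p.2.1⟩) (fun p _ => ⟨p.2 + p.1, p.2, p.1⟩)
    ?_ ?_ ?_ ?_ ?_
  · rintro ⟨δ, α₁, α₂⟩ h
    simp only [Finset.mem_sigma, Finset.mem_Iic, Finset.HasAntidiagonal.mem_antidiagonal] at h ⊢
    obtain ⟨hδ, rfl⟩ := h
    exact ⟨le_trans le_add_self hδ, le_tsub_of_add_le_right hδ⟩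
  · rintro ⟨α₂, α₁⟩ h
    simp only [Finset.mem_sigma, Finset.mem_Iic, Finset.HasAntidiagonal.mem_antidiagonal,
      and_true] at h ⊢
    exact (le_tsub_iff_right h.1).1 h.2
  · rintro ⟨δ, α₁, α₂⟩ h
    simp only [Finset.mem_sigma, Finset.HasAntidiagonal.mem_antidiagonal] at h
    simp [h.2]
  · rintro ⟨α₂, α₁⟩ _
    rfl
  · rintro ⟨δ, α₁, α₂⟩ h
    simp only [Finset.mem_sigma, Finset.HasAntidiagonal.mem_antidiagonal] at h
    obtain ⟨-, rfl⟩ := h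
    rw [prod_descFactorial_add, tsub_tsub, add_comm α₂ α₁]
    congr 1
    ring

lemma contract_psX (i : Fin n) :
    contract (psX i : MvPowerSeries (Fin n) K) = (MvPolynomial.pderiv i).toLinearMap := by
  classical
  refine (MvPolynomial.basisMonomials (Fin n) K).ext fun β => ?_
  rw [MvPolynomial.coe_basisMonomials, contract_monomial]
  change _ = MvPolynomial.pderiv i (MvPolynomial.monomial β 1)
  rw [MvPolynomial.pderiv_monomial, Finset.sum_eq_single (Finsupp.single i 1)]
  · have single_descFactorial (j : Fin n) :
        ((β j).descFactorial (Finsupp.single i 1 j) : K) = if j = i then (β i : K) else 1 := by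
      by_cases hji : j = i <;> simp [hji]
    simp [psX, coeff_X, single_descFactorial, MvPolynomial.smul_monomial]
  · intro α _ hα
    simp [psX, coeff_X, hα]
  · intro hi
    have β_eq_zero : β i = 0 := by simpa [Finsupp.single_le_iff, Nat.one_le_iff_ne_zero] using hi
    rw [Finset.prod_eq_zero (Finset.mem_univ i) (by simp [β_eq_zero]), mul_zero, zero_smul]

lemma mem_annR {F : MvPolynomial (Fin n) K} {f : MvPowerSeries (Fin n) K} :
    f ∈ annR F ↔ contract f F = 0 := by
  refine ⟨fun h => by simpa only [one_mul] using h 1, fun h u => ?_⟩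
  rw [contract_mul, LinearMap.comp_apply, h, map_zero]

/-- Macaulay's apolarity pairing with `F`: the linear form `f ↦ (f ∘ F)(0)` on `R`.  It vanishes
on `annR F`, and `(f, g) ↦ apolarFunctional F (f * g)` descends to a pairing on `R ⧸ annR F`. -/
noncomputable def apolarFunctional (F : MvPolynomial (Fin n) K) :
    MvPowerSeries (Fin n) K →ₗ[K] K where
  toFun f := MvPolynomial.constantCoeff (contract f F)
  map_add' f g := by rw [contract_add, LinearMap.add_apply, map_add]
  map_smul' c f := by
    rw [contract_smul, LinearMap.smul_apply, MvPolynomial.constantCoeff_smul, RingHom.id_apply]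

lemma apolarFunctional_apply (F : MvPolynomial (Fin n) K) (f : MvPowerSeries (Fin n) K) :
    apolarFunctional F f = MvPolynomial.constantCoeff (contract f F) := rfl

lemma apolarFunctional_mul_eq_zero {F : MvPolynomial (Fin n) K} {f : MvPowerSeries (Fin n) K}
    (hf : f ∈ annR F) (u : MvPowerSeries (Fin n) K) : apolarFunctional F (u * f) = 0 := by
  rw [apolarFunctional_apply, hf u, map_zero]

end Contraction

section VariableIdeals

lemma mem_span_X_image_iff {σ A : Type*} [CommRing A] (s : Finset σ) {f : MvPowerSeries σ A} :
    f ∈ Ideal.span (X '' (s : Set σ)) ↔ ∀ α : σ →₀ ℕ, (∀ i ∈ s, α i = 0) → coeff α f = 0 := by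
  classical
  induction s using Finset.induction_on generalizing f with
  | empty => simp [MvPowerSeries.ext_iff]
  | insert i s _ ih =>
    rw [Finset.coe_insert, Set.image_insert_eq, Ideal.mem_span_insert']
    simp only [ih, Finset.forall_mem_insert]
    constructor
    · rintro ⟨a, ha⟩ α ⟨hi, hs⟩
      rw [← ha α hs, map_add, X_dvd_iff.1 (Dvd.intro_left a rfl) α hi, add_zero]
    · intro hf
      let g : MvPowerSeries σ A := fun α => if α i = 0 then 0 else coeff α f
      obtain ⟨a, ha⟩ : X i ∣ g := X_dvd_iff.2 fun α hα => if_pos hα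
      refine ⟨-a, fun α hα => ?_⟩
      rw [neg_mul, mul_comm, ← ha, map_add, map_neg, ← sub_eq_add_neg, sub_eq_zero]
      by_cases hi : α i = 0
      · exact (hf α ⟨hi, hα⟩).trans (if_pos hi).symm
      · exact (if_neg hi).symm

lemma X_mem_span_X_image_iff {σ A : Type*} [CommRing A] [Nontrivial A] (s : Finset σ) {i : σ} :
    (X i : MvPowerSeries σ A) ∈ Ideal.span (X '' (s : Set σ)) ↔ i ∈ s := by
  classical
  refine ⟨fun h => ?_, fun h => Ideal.subset_span ⟨i, h, rfl⟩⟩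
  by_contra hi
  have : coeff (Finsupp.single i 1) (X i : MvPowerSeries σ A) = 0 :=
    (mem_span_X_image_iff s).1 h _ fun j hj => Finsupp.single_eq_of_ne (by grind)
  simp at this

/- The ideal consists of the series of positive order for the weight that is `1` on `s` and `0`
elsewhere, and weighted orders add up in a product. -/
lemma isPrime_span_X_image {σ A : Type*} [CommRing A] [IsDomain A] (s : Finset σ) :
    (Ideal.span (X '' (s : Set σ)) : Ideal (MvPowerSeries σ A)).IsPrime := by
  classical
  let w : σ → ℕ := fun i => if i ∈ s then 1 else 0
  have weight_eq_zero (α : σ →₀ ℕ) : Finsupp.weight w α = 0 ↔ ∀ i ∈ s, α i = 0 := by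
    simp only [w, Finsupp.weight_apply, Finsupp.sum, smul_eq_mul, mul_ite, mul_one, mul_zero,
      Finset.sum_ite_mem, Finset.sum_eq_zero_iff, Finset.mem_inter, Finsupp.mem_support_iff]
    grind
  have mem_iff (f : MvPowerSeries σ A) :
      f ∈ Ideal.span (X '' (s : Set σ)) ↔ f.weightedOrder w ≠ 0 := by
    rw [mem_span_X_image_iff, ← Order.one_le_iff_ne_zero]
    refine ⟨fun h => ?_, fun h α hα => ?_⟩
    · exact nat_le_weightedOrder w fun d hd => h d ((weight_eq_zero d).1 (by lia))
    · refine coeff_eq_zero_of_lt_weightedOrder w ?_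
      rw [(weight_eq_zero α).2 hα]
      exact lt_of_lt_of_le zero_lt_one h
  refine ⟨(Ideal.ne_top_iff_one _).2 ?_, fun {f g} hfg => ?_⟩
  · simp [mem_iff, weightedOrder_one]
  · rw [mem_iff, weightedOrder_mul] at hfg
    rw [mem_iff, mem_iff]
    by_contra! h
    simp [h] at hfg

lemma mxR_eq_span_range_psX (K : Type*) [Field K] (n : ℕ) :
    mxR K n = Ideal.span (Set.range psX) := by
  have range_psX : Set.range (psX (K := K) (n := n)) =
      X '' ((Finset.univ : Finset (Fin n)) : Set (Fin n)) := by
    rw [Finset.coe_univ, Set.image_univ]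
    rfl
  ext f
  rw [range_psX, mem_span_X_image_iff, mxR, RingHom.mem_ker]
  refine ⟨fun h α hα => ?_, fun h => ?_⟩
  · have : α = 0 := by ext i; simpa using hα i (Finset.mem_univ i)
    subst this; simpa using h
  · rw [← coeff_zero_eq_constantCoeff_apply]
    exact h 0 (by simp)

end VariableIdeals

section DualFamily

variable {K V ι : Type*} [Field K] [AddCommGroup V] [Module K V] {N : Submodule K V}
  {v : ι → V} {ψ : ι → V →ₗ[K] K}

lemma coeff_eq_zero_of_dual_apply_sum_eq_zero [Fintype ι]
    (hψv : ∀ i j, ψ i (v j) = 0 ↔ i ≠ j) {c : ι → K} {i : ι}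
    (h : ψ i (∑ j, c j • v j) = 0) : c i = 0 := by
  classical
  rw [map_sum, Finset.sum_eq_single_of_mem i (Finset.mem_univ i)
    fun j _ hji => by rw [map_smul, (hψv i j).2 hji.symm, smul_zero], map_smul] at h
  exact (smul_eq_zero.1 h).resolve_right fun hi => (hψv i i).1 hi rfl

lemma mem_of_forall_dual_apply_eq_zero [Finite ι] (hψv : ∀ i j, ψ i (v j) = 0 ↔ i ≠ j)
    (hψN : ∀ i, ∀ x ∈ N, ψ i x = 0) (hspan : N ⊔ Submodule.span K (Set.range v) = ⊤) {x : V}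
    (hx : ∀ i, ψ i x = 0) : x ∈ N := by
  have := Fintype.ofFinite ι
  obtain ⟨y, hy, z, hz, rfl⟩ := Submodule.mem_sup.1 (hspan ▸ Submodule.mem_top : x ∈ _)
  obtain ⟨c, rfl⟩ := (Submodule.mem_span_range_iff_exists_fun K).1 hz
  have coeff_eq_zero (i : ι) : c i = 0 :=
    coeff_eq_zero_of_dual_apply_sum_eq_zero hψv <| by
      simpa only [map_add, hψN i y hy, zero_add] using hx i
  simpa only [coeff_eq_zero, zero_smul, Finset.sum_const_zero, add_zero] using hy

lemma finrank_quotient_eq_card [Fintype ι] (hψv : ∀ i j, ψ i (v j) = 0 ↔ i ≠ j)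
    (hψN : ∀ i, ∀ x ∈ N, ψ i x = 0) (hspan : N ⊔ Submodule.span K (Set.range v) = ⊤) :
    Module.finrank K (V ⧸ N) = Fintype.card ι := by
  have linearIndependent_mkQ : LinearIndependent K (N.mkQ ∘ v) := by
    refine Fintype.linearIndependent_iff.2 fun c hc i => ?_
    have sum_mem : ∑ j, c j • v j ∈ N := by
      rw [← Submodule.ker_mkQ N, LinearMap.mem_ker, map_sum]
      simpa only [Function.comp_apply, map_smul] using hc
    exact coeff_eq_zero_of_dual_apply_sum_eq_zero hψv (hψN i _ sum_mem)
  have span_mkQ : Submodule.span K (Set.range (N.mkQ ∘ v)) = ⊤ := by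
    rw [Set.range_comp, Submodule.span_image, Submodule.map_mkQ_eq_top, hspan]
  rw [← finrank_span_eq_card linearIndependent_mkQ, span_mkQ, finrank_top]

end DualFamily

section GradedGenerators

variable {K : Type*} [Field K] {n : ℕ} {ι : Type*} {I : Ideal (MvPowerSeries (Fin n) K)}
  {v : ι → MvPowerSeries (Fin n) K} {deg : ι → ℕ}

lemma restrictScalars_span_le (s : Set (MvPowerSeries (Fin n) K)) :
    (Ideal.span s).restrictScalars K ≤
      Submodule.span K s ⊔ (mxR K n * Ideal.span s).restrictScalars K := by
  intro x hx
  induction hx using Submodule.span_induction with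
  | mem x hx => exact Submodule.mem_sup_left (Submodule.subset_span hx)
  | zero => exact zero_mem _
  | add x y _ _ hx hy => exact add_mem hx hy
  | smul f x hxs hx =>
    have sub_mem_mxR : f - C (constantCoeff f) ∈ mxR K n := by simp [mxR, RingHom.mem_ker]
    have split : f • x = constantCoeff f • x + (f - C (constantCoeff f)) * x := by
      rw [smul_eq_mul, smul_eq_C_mul]
      ring
    rw [split]
    exact add_mem (Submodule.smul_mem _ _ hx)
      (Submodule.mem_sup_right (Ideal.mul_mem_mul sub_mem_mxR hxs))

/-- The family `v`, with `v j` in the `deg j`-th power of the maximal ideal `m`, generates `R ⧸ I`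
degree by degree: the elements of degree `0` generate it as a module, and modulo `I` each variable
sends an element of degree `k` into the ideal generated by those of degree `k + 1`.  This makes
the `v j` with `deg j < k` span `R ⧸ (I + m ^ k)` over `K`, for every `k`. -/
structure IsGradedGenerating (I : Ideal (MvPowerSeries (Fin n) K))
    (v : ι → MvPowerSeries (Fin n) K) (deg : ι → ℕ) : Prop where
  mem_pow (j : ι) : v j ∈ mxR K n ^ deg j
  sup_span_zero : I ⊔ Ideal.span (v '' {j | deg j = 0}) = ⊤
  psX_mul_mem (i : Fin n) (j : ι) :
    psX i * v j ∈ I ⊔ Ideal.span (v '' {k | deg k = deg j + 1})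

namespace IsGradedGenerating

lemma mxR_pow_le (h : IsGradedGenerating I v deg) (k : ℕ) :
    mxR K n ^ k ≤ I ⊔ Ideal.span (v '' {j | deg j = k}) := by
  induction k with
  | zero => rw [h.sup_span_zero]; exact le_top
  | succ k ih =>
    calc mxR K n ^ (k + 1) = mxR K n * mxR K n ^ k := pow_succ' _ _
      _ ≤ mxR K n * (I ⊔ Ideal.span (v '' {j | deg j = k})) := Ideal.mul_mono_right ih
      _ = mxR K n * I ⊔ Ideal.span (Set.range psX) * Ideal.span (v '' {j | deg j = k}) := by
        rw [Ideal.mul_sup, ← mxR_eq_span_range_psX]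
      _ ≤ I ⊔ Ideal.span (v '' {j | deg j = k + 1}) := by
        refine sup_le (le_sup_of_le_left Ideal.mul_le_right) ?_
        rw [Ideal.span_mul_span', Ideal.span_le]
        rintro _ ⟨_, ⟨i, rfl⟩, _, ⟨j, rfl, rfl⟩, rfl⟩
        exact h.psX_mul_mem i j

lemma mxR_pow_le_of_forall_deg_ne (h : IsGradedGenerating I v deg) {k : ℕ}
    (hk : ∀ j, deg j ≠ k) : mxR K n ^ k ≤ I := by
  simpa [hk] using h.mxR_pow_le k

lemma mxR_mul_span_le (h : IsGradedGenerating I v deg) (k : ℕ) :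
    mxR K n * Ideal.span (v '' {j | deg j = k}) ≤ mxR K n ^ (k + 1) := by
  rw [pow_succ']
  refine Ideal.mul_mono_right (Ideal.span_le.2 ?_)
  rintro _ ⟨j, rfl, rfl⟩
  exact h.mem_pow j

lemma sup_span_eq_top (h : IsGradedGenerating I v deg) (k : ℕ) :
    (I ⊔ mxR K n ^ k).restrictScalars K ⊔ Submodule.span K (v '' {j | deg j < k}) = ⊤ := by
  induction k with
  | zero => simp
  | succ k ih =>
    set T := (I ⊔ mxR K n ^ (k + 1)).restrictScalars K ⊔
      Submodule.span K (v '' {j | deg j < k + 1})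
    have ideal_le : I.restrictScalars K ≤ T :=
      le_sup_of_le_left (fun _ hf => Ideal.mem_sup_left hf)
    have span_le {s : Set ι} (hs : ∀ j ∈ s, deg j < k + 1) : Submodule.span K (v '' s) ≤ T :=
      le_sup_of_le_right (Submodule.span_mono (Set.image_mono hs))
    have pow_le : (mxR K n ^ k).restrictScalars K ≤ T := by
      intro f hf
      obtain ⟨g, hg, u, hu, rfl⟩ := Submodule.mem_sup.1 (h.mxR_pow_le k hf)
      refine add_mem (ideal_le hg) (sup_le (span_le ?_) ?_ (restrictScalars_span_le _ hu))
      · exact fun j hj => hj.le.trans_lt k.lt_succ_self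
      · exact le_sup_of_le_left fun _ hf => Ideal.mem_sup_right (h.mxR_mul_span_le k hf)
    rw [eq_top_iff, ← ih]
    refine sup_le (fun f hf => ?_) (span_le fun j hj => Nat.lt_succ_of_lt hj)
    obtain ⟨g, hg, u, hu, rfl⟩ := Submodule.mem_sup.1 hf
    exact add_mem (ideal_le hg) (pow_le hu)

end IsGradedGenerating

end GradedGenerators

section ApolarDuality

variable {K : Type*} [Field K] {n : ℕ} {ι : Type*} {I : Ideal (MvPowerSeries (Fin n) K)}
  {F : MvPolynomial (Fin n) K} {v : ι → MvPowerSeries (Fin n) K} {deg : ι → ℕ}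

lemma annR_eq_of_apolar_dual [Finite ι] (h : IsGradedGenerating I v deg) (hI : I ≤ annR F)
    {w : ι → MvPowerSeries (Fin n) K}
    (hw : ∀ i j, apolarFunctional F (w i * v j) = 0 ↔ i ≠ j) : annR F = I := by
  obtain ⟨d, deg_le⟩ := (Set.finite_range deg).bddAbove
  have deg_lt (j : ι) : deg j < d + 1 := Nat.lt_succ_of_le (deg_le ⟨j, rfl⟩)
  have span_eq_top : I.restrictScalars K ⊔ Submodule.span K (Set.range v) = ⊤ := by
    simpa [deg_lt, sup_eq_left.2 (h.mxR_pow_le_of_forall_deg_ne fun j => (deg_lt j).ne)]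
      using h.sup_span_eq_top (d + 1)
  refine le_antisymm (fun f hf => ?_) hI
  exact mem_of_forall_dual_apply_eq_zero (N := I.restrictScalars K)
    (ψ := fun i => apolarFunctional F ∘ₗ LinearMap.mulLeft K (w i)) hw
    (fun i x hx => apolarFunctional_mul_eq_zero (hI hx) (w i)) span_eq_top
    (fun i => apolarFunctional_mul_eq_zero hf (w i))

variable [Fintype ι] {σ : ι → ι} {d : ℕ}

lemma finrank_quotient_annR_sup_mxR_pow (h : IsGradedGenerating (annR F) v deg)
    (hσ : ∀ i, deg (σ i) + deg i = d)
    (hv : ∀ i j, apolarFunctional F (v (σ i) * v j) = 0 ↔ i ≠ j) (k : ℕ) :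
    Module.finrank K (MvPowerSeries (Fin n) K ⧸ (annR F ⊔ mxR K n ^ k)) =
      Fintype.card {j // deg j < k} := by
  have mxR_pow_le : mxR K n ^ (d + 1) ≤ annR F :=
    h.mxR_pow_le_of_forall_deg_ne fun j => by have := hσ j; lia
  have mul_mem (i : ι) (hi : deg i < k) (f : MvPowerSeries (Fin n) K)
      (hf : f ∈ annR F ⊔ mxR K n ^ k) : v (σ i) * f ∈ annR F := by
    obtain ⟨g, hg, u, hu, rfl⟩ := Submodule.mem_sup.1 hf
    rw [mul_add]
    refine add_mem (Ideal.mul_mem_left _ _ hg) (mxR_pow_le ?_)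
    refine Ideal.pow_le_pow_right (show d + 1 ≤ deg (σ i) + k by have := hσ i; lia) ?_
    exact pow_add (mxR K n) _ _ ▸ Ideal.mul_mem_mul (h.mem_pow (σ i)) hu
  rw [← (Submodule.Quotient.restrictScalarsEquiv K (annR F ⊔ mxR K n ^ k)).finrank_eq]
  refine finrank_quotient_eq_card (v := fun j : {j // deg j < k} => v j)
    (ψ := fun i => apolarFunctional F ∘ₗ LinearMap.mulLeft K (v (σ i)))
    (fun i j => (hv i j).trans Subtype.coe_injective.ne_iff)
    (fun i f hf => ?_) ?_
  · simpa using apolarFunctional_mul_eq_zero (mul_mem i i.2 f hf) 1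
  · exact Set.image_eq_range v {j | deg j < k} ▸ h.sup_span_eq_top k

lemma hilbQ_annR_eq_card (h : IsGradedGenerating (annR F) v deg)
    (hσ : ∀ i, deg (σ i) + deg i = d)
    (hv : ∀ i j, apolarFunctional F (v (σ i) * v j) = 0 ↔ i ≠ j) (k : ℕ) :
    hilbQ (annR F) k = Fintype.card {j // deg j = k} := by
  have card_lt_succ : Fintype.card {j // deg j < k + 1} =
      Fintype.card {j // deg j < k} + Fintype.card {j // deg j = k} := by
    simp only [Nat.lt_succ_iff_lt_or_eq]
    exact Fintype.card_subtype_or_disjoint _ _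
      (Pi.disjoint_iff.2 fun j => Prop.disjoint_iff.2 fun h => h.1.ne h.2)
  rw [hilbQ, finrank_quotient_annR_sup_mxR_pow h hσ hv, finrank_quotient_annR_sup_mxR_pow h hσ hv,
    card_lt_succ, Nat.add_sub_cancel_left]

end ApolarDuality

section LegendreApolarity

variable {K : Type*} [Field K] {lam : K}

lemma pderiv_zero_legendreCubic (lam : K) : MvPolynomial.pderiv 0 (legendreCubic lam) =
    (2 * (1 + lam)) • (MvPolynomial.X 0 * MvPolynomial.X 2) - (3 : K) • MvPolynomial.X 0 ^ 2 -
      lam • MvPolynomial.X 2 ^ 2 := by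
  simp only [legendreCubic, pow_two, map_sub, Derivation.leibniz, MvPolynomial.pderiv_X,
    MvPolynomial.pderiv_C, Pi.single_eq_same, Pi.single_eq_of_ne, ne_eq, Fin.reduceEq,
    one_ne_zero, not_false_eq_true, smul_eq_mul, MvPolynomial.smul_eq_C_mul, map_mul, map_add,
    map_one, map_ofNat]
  ring

lemma pderiv_one_legendreCubic (lam : K) : MvPolynomial.pderiv 1 (legendreCubic lam) =
    (2 : K) • (MvPolynomial.X 1 * MvPolynomial.X 2) := by
  simp only [legendreCubic, pow_two, map_sub, Derivation.leibniz, MvPolynomial.pderiv_X,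
    MvPolynomial.pderiv_C, Pi.single_eq_same, Pi.single_eq_of_ne, ne_eq, Fin.reduceEq,
    zero_ne_one, not_false_eq_true, smul_eq_mul, MvPolynomial.smul_eq_C_mul, map_ofNat]
  ring

lemma pderiv_two_legendreCubic (lam : K) : MvPolynomial.pderiv 2 (legendreCubic lam) =
    MvPolynomial.X 1 ^ 2 + (1 + lam) • MvPolynomial.X 0 ^ 2 -
      (2 * lam) • (MvPolynomial.X 0 * MvPolynomial.X 2) := by
  simp only [legendreCubic, pow_two, map_sub, Derivation.leibniz, MvPolynomial.pderiv_X,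
    MvPolynomial.pderiv_C, Pi.single_eq_same, Pi.single_eq_of_ne, ne_eq, Fin.reduceEq,
    not_false_eq_true, smul_eq_mul, MvPolynomial.smul_eq_C_mul, map_mul, map_add,
    map_one, map_ofNat]
  ring

lemma psX_zero_mul_psX_one_mem_annR (lam : K) : psX 0 * psX 1 ∈ annR (legendreCubic lam) := by
  simp [mem_annR, contract_mul, contract_psX, pderiv_one_legendreCubic]

lemma legH1_mem_annR (lam : K) : legH1 lam ∈ annR (legendreCubic lam) := by
  simp only [legH1, pow_two, mem_annR, contract_add, contract_smul, contract_mul, contract_psX,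
    LinearMap.add_apply, LinearMap.smul_apply, LinearMap.comp_apply, Derivation.coeFn_coe,
    pderiv_zero_legendreCubic, pderiv_two_legendreCubic, map_sub, map_add, Derivation.map_smul,
    Derivation.leibniz, MvPolynomial.pderiv_X, ne_eq, Fin.reduceEq, one_ne_zero, not_false_eq_true,
    Pi.single_eq_same, Pi.single_eq_of_ne, smul_eq_mul, mul_zero, mul_one]
  algebra

lemma legH2_mem_annR (lam : K) : legH2 lam ∈ annR (legendreCubic lam) := by
  simp only [legH2, pow_two, mem_annR, contract_add, contract_smul, contract_mul, contract_psX,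
    LinearMap.add_apply, LinearMap.smul_apply, LinearMap.comp_apply, Derivation.coeFn_coe,
    pderiv_one_legendreCubic, pderiv_two_legendreCubic, map_sub, map_add, Derivation.map_smul,
    Derivation.leibniz, MvPolynomial.pderiv_X, ne_eq, Fin.reduceEq, one_ne_zero, not_false_eq_true,
    Pi.single_eq_same, Pi.single_eq_of_ne, smul_eq_mul, mul_zero, mul_one]
  algebra

/-- The ideal `(x₁x₂, H₁, H₂)` generated by the quadrics apolar to the Legendre cubic. -/
noncomputable abbrev legendreIdeal (lam : K) : Ideal (MvPowerSeries (Fin 3) K) :=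
  Ideal.span {psX 0 * psX 1, legH1 lam, legH2 lam}

lemma legendreIdeal_le_annR (lam : K) : legendreIdeal lam ≤ annR (legendreCubic lam) := by
  rw [Ideal.span_le]
  rintro _ (rfl | rfl | rfl)
  exacts [psX_zero_mul_psX_one_mem_annR lam, legH1_mem_annR lam, legH2_mem_annR lam]

/-- The monomials `1, x₁, x₂, x₃, x₂², x₂x₃, x₃², x₂²x₃`, a basis of `R ⧸ annR (legendreCubic lam)`.
They are listed so that the `i`-th is apolar to all but the one in the opposite position `i.rev`. -/
noncomputable def legendreBasis (K : Type*) [Field K] : Fin 8 → MvPowerSeries (Fin 3) K :=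
  ![1, psX 0, psX 1, psX 2, psX 1 ^ 2, psX 1 * psX 2, psX 2 ^ 2, psX 1 ^ 2 * psX 2]

/-- The degrees of the monomials `legendreBasis`. -/
def legendreDeg : Fin 8 → ℕ := ![0, 1, 1, 1, 2, 2, 2, 3]

lemma apolar_legendreBasis (h2 : (2 : K) ≠ 0) (h0 : lam ≠ 0) (i j : Fin 8) :
    apolarFunctional (legendreCubic lam) (legendreBasis K i.rev * legendreBasis K j) = 0 ↔
      i ≠ j := by
  have constantCoeff_eq_zero : MvPolynomial.constantCoeff (legendreCubic lam) = 0 := by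
    simp [legendreCubic]
  have one_add_one_ne_zero : (1 : K) + 1 ≠ 0 := by rwa [one_add_one_eq_two]
  have neg_add_neg_ne_zero : -lam + -lam ≠ 0 := by simp [← two_mul, h2, h0]
  fin_cases i <;> fin_cases j <;>
    simp [apolarFunctional_apply, legendreBasis, contract_mul, contract_psX, contract_one, pow_two,
      MvPolynomial.pderiv_X, h2, h0, pderiv_zero_legendreCubic, pderiv_one_legendreCubic,
      pderiv_two_legendreCubic, constantCoeff_eq_zero, one_add_one_ne_zero, neg_add_neg_ne_zero,
      Fin.rev]

end LegendreApolarity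

section LegendreGenerators

variable {K : Type*} [Field K] {lam : K}

lemma mem_of_smul_mem {A : Type*} [CommRing A] [Algebra K A] {I : Ideal A} {c : K} (hc : c ≠ 0)
    {f : A} (h : c • f ∈ I) : f ∈ I :=
  ((I.restrictScalars K).smul_mem_iff hc).1 h

lemma mem_legendreIdeal_of_smul_eq {c : K} (hc : c ≠ 0) {f p q r : MvPowerSeries (Fin 3) K}
    (h : c • f = p * (psX 0 * psX 1) + q * legH1 lam + r * legH2 lam) : f ∈ legendreIdeal lam := by
  refine mem_of_smul_mem hc (h ▸ add_mem (add_mem ?_ ?_) ?_) <;>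
    exact Ideal.mul_mem_left _ _ (Ideal.subset_span (by simp))

lemma psX_two_pow_three_mem_legendreIdeal (hj : lam ^ 2 - lam + 1 ≠ 0) :
    psX 2 ^ 3 ∈ legendreIdeal lam := by
  refine mem_legendreIdeal_of_smul_eq hj (p := lam ^ 3 • psX 1) (q := psX 2) (r := -lam • psX 0) ?_
  unfold legH1 legH2
  algebra

lemma psX_one_mul_psX_two_sq_mem_legendreIdeal (hj : lam ^ 2 - lam + 1 ≠ 0) :
    psX 1 * psX 2 ^ 2 ∈ legendreIdeal lam := by
  refine mem_legendreIdeal_of_smul_eq hj (q := psX 1) (r := 0)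
    (p := -(lam ^ 2 • psX 0 + (lam * (1 + lam)) • psX 2)) ?_
  unfold legH1
  algebra

lemma psX_one_pow_three_mem_legendreIdeal (h0 : lam ≠ 0) (hj : lam ^ 2 - lam + 1 ≠ 0) :
    psX 1 ^ 3 ∈ legendreIdeal lam := by
  refine mem_legendreIdeal_of_smul_eq (mul_ne_zero (pow_ne_zero 2 h0) hj)
    (p := (lam ^ 2 * (1 + lam)) • psX 0 + (3 * lam ^ 2) • psX 2) (q := -(1 + lam) • psX 1)
    (r := (lam ^ 2 - lam + 1) • psX 1) ?_
  unfold legH1 legH2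
  algebra

variable {T : Ideal (MvPowerSeries (Fin 3) K)}

lemma psX_zero_mul_psX_two_mem (h0 : lam ≠ 0) (hT : legendreIdeal lam ≤ T)
    (hy : psX 1 ^ 2 ∈ T) (hz : psX 2 ^ 2 ∈ T) : psX 0 * psX 2 ∈ T := by
  refine mem_of_smul_mem h0 ?_
  have relation : lam • (psX 0 * psX 2) =
      legH2 lam - lam ^ 2 • psX 1 ^ 2 - (1 + lam) • psX 2 ^ 2 := by
    unfold legH2
    algebra
  rw [relation]
  exact sub_mem (sub_mem (hT (Ideal.subset_span (by simp))) (T.smul_of_tower_mem _ hy))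
    (T.smul_of_tower_mem _ hz)

lemma psX_zero_mul_psX_two_sq_mem (h0 : lam ≠ 0) (hj : lam ^ 2 - lam + 1 ≠ 0)
    (hT : legendreIdeal lam ≤ T) (h : psX 1 ^ 2 * psX 2 ∈ T) : psX 0 * psX 2 ^ 2 ∈ T := by
  refine mem_of_smul_mem h0 ?_
  have relation : lam • (psX 0 * psX 2 ^ 2) =
      psX 2 * legH2 lam - lam ^ 2 • (psX 1 ^ 2 * psX 2) - (1 + lam) • psX 2 ^ 3 := by
    unfold legH2
    algebra
  rw [relation]
  exact sub_mem (sub_mem (T.mul_mem_left _ (hT (Ideal.subset_span (by simp))))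
    (T.smul_of_tower_mem _ h))
    (T.smul_of_tower_mem _ (hT (psX_two_pow_three_mem_legendreIdeal hj)))

lemma psX_zero_sq_mem (h0 : lam ≠ 0) (hT : legendreIdeal lam ≤ T)
    (hxz : psX 0 * psX 2 ∈ T) (hz : psX 2 ^ 2 ∈ T) : psX 0 ^ 2 ∈ T := by
  refine mem_of_smul_mem (pow_ne_zero 2 h0) ?_
  have relation : lam ^ 2 • psX 0 ^ 2 =
      legH1 lam - (lam * (1 + lam)) • (psX 0 * psX 2) - (lam ^ 2 - lam + 1) • psX 2 ^ 2 := by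
    unfold legH1
    algebra
  rw [relation]
  exact sub_mem (sub_mem (hT (Ideal.subset_span (by simp))) (T.smul_of_tower_mem _ hxz))
    (T.smul_of_tower_mem _ hz)

lemma legendreBasis_mem_mxR_pow (j : Fin 8) : legendreBasis K j ∈ mxR K 3 ^ legendreDeg j := by
  have psX_mem (i : Fin 3) : psX i ∈ mxR K 3 := by simp [mxR, RingHom.mem_ker, psX]
  have psX_mem_pow_one (i : Fin 3) : psX i ∈ mxR K 3 ^ 1 := by simpa using psX_mem i
  fin_cases j
  · simp [legendreDeg]
  · exact psX_mem_pow_one 0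
  · exact psX_mem_pow_one 1
  · exact psX_mem_pow_one 2
  · exact Ideal.pow_mem_pow (psX_mem 1) 2
  · exact pow_two (mxR K 3) ▸ Ideal.mul_mem_mul (psX_mem 1) (psX_mem 2)
  · exact Ideal.pow_mem_pow (psX_mem 2) 2
  · exact pow_succ (mxR K 3) 2 ▸ Ideal.mul_mem_mul (Ideal.pow_mem_pow (psX_mem 1) 2) (psX_mem 2)

lemma psX_mul_psX_mem (h0 : lam ≠ 0) (hT : legendreIdeal lam ≤ T) (hyy : psX 1 ^ 2 ∈ T)
    (hyz : psX 1 * psX 2 ∈ T) (hzz : psX 2 ^ 2 ∈ T) (i j : Fin 3) : psX i * psX j ∈ T := by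
  have hxy : psX 0 * psX 1 ∈ T := hT (Ideal.subset_span (by simp))
  have hxz : psX 0 * psX 2 ∈ T := psX_zero_mul_psX_two_mem h0 hT hyy hzz
  have hxx : psX 0 ^ 2 ∈ T := psX_zero_sq_mem h0 hT hxz hzz
  rw [pow_two] at hxx hyy hzz
  fin_cases i <;> fin_cases j <;> first | assumption | (rw [mul_comm]; assumption)

lemma psX_mul_quadric_mem (h0 : lam ≠ 0) (hj : lam ^ 2 - lam + 1 ≠ 0)
    (hT : legendreIdeal lam ≤ T) (hyyz : psX 1 ^ 2 * psX 2 ∈ T) (i : Fin 3) :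
    psX i * psX 1 ^ 2 ∈ T ∧ psX i * (psX 1 * psX 2) ∈ T ∧ psX i * psX 2 ^ 2 ∈ T := by
  have hxy : psX 0 * psX 1 ∈ T := hT (Ideal.subset_span (by simp))
  have hyyy := hT (psX_one_pow_three_mem_legendreIdeal h0 hj)
  have hyzz := hT (psX_one_mul_psX_two_sq_mem_legendreIdeal hj)
  have hzzz := hT (psX_two_pow_three_mem_legendreIdeal hj)
  fin_cases i
  · exact ⟨T.mem_of_dvd ⟨psX 1, by ring!⟩ hxy, T.mem_of_dvd ⟨psX 2, by ring!⟩ hxy,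
      psX_zero_mul_psX_two_sq_mem h0 hj hT hyyz⟩
  · exact ⟨T.mem_of_dvd ⟨1, by ring!⟩ hyyy, T.mem_of_dvd ⟨1, by ring!⟩ hyyz, hyzz⟩
  · exact ⟨T.mem_of_dvd ⟨1, by ring!⟩ hyyz, T.mem_of_dvd ⟨1, by ring!⟩ hyzz,
      T.mem_of_dvd ⟨1, by ring!⟩ hzzz⟩

lemma psX_mul_psX_one_sq_mul_psX_two_mem (h0 : lam ≠ 0) (hj : lam ^ 2 - lam + 1 ≠ 0) (i : Fin 3) :
    psX i * (psX 1 ^ 2 * psX 2) ∈ legendreIdeal lam := by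
  have hxy : psX 0 * psX 1 ∈ legendreIdeal lam := Ideal.subset_span (by simp)
  fin_cases i
  · exact Ideal.mem_of_dvd _ ⟨psX 1 * psX 2, by ring!⟩ hxy
  · exact Ideal.mem_of_dvd _ ⟨psX 2, by ring!⟩ (psX_one_pow_three_mem_legendreIdeal h0 hj)
  · exact Ideal.mem_of_dvd _ ⟨psX 1, by ring!⟩ (psX_one_mul_psX_two_sq_mem_legendreIdeal hj)

lemma psX_mul_legendreBasis_mem (h0 : lam ≠ 0) (hj : lam ^ 2 - lam + 1 ≠ 0) (i : Fin 3)
    (j : Fin 8) (hT : legendreIdeal lam ≤ T)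
    (h : ∀ k, legendreDeg k = legendreDeg j + 1 → legendreBasis K k ∈ T) :
    psX i * legendreBasis K j ∈ T := by
  fin_cases j
  · refine (mul_one (psX i : MvPowerSeries (Fin 3) K)).symm ▸ ?_
    fin_cases i
    exacts [h 1 rfl, h 2 rfl, h 3 rfl]
  · exact psX_mul_psX_mem h0 hT (h 4 rfl) (h 5 rfl) (h 6 rfl) i 0
  · exact psX_mul_psX_mem h0 hT (h 4 rfl) (h 5 rfl) (h 6 rfl) i 1
  · exact psX_mul_psX_mem h0 hT (h 4 rfl) (h 5 rfl) (h 6 rfl) i 2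
  · exact (psX_mul_quadric_mem h0 hj hT (h 7 rfl) i).1
  · exact (psX_mul_quadric_mem h0 hj hT (h 7 rfl) i).2.1
  · exact (psX_mul_quadric_mem h0 hj hT (h 7 rfl) i).2.2
  · exact hT (psX_mul_psX_one_sq_mul_psX_two_mem h0 hj i)

lemma isGradedGenerating_legendreBasis (h0 : lam ≠ 0) (hj : lam ^ 2 - lam + 1 ≠ 0) :
    IsGradedGenerating (legendreIdeal lam) (legendreBasis K) legendreDeg where
  mem_pow := legendreBasis_mem_mxR_pow
  sup_span_zero := by
    rw [Ideal.eq_top_iff_one]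
    exact Ideal.mem_sup_right (Ideal.subset_span ⟨0, rfl, rfl⟩)
  psX_mul_mem i j := psX_mul_legendreBasis_mem h0 hj i j le_sup_left fun k hk =>
    Ideal.mem_sup_right (Ideal.subset_span ⟨k, hk, rfl⟩)

end LegendreGenerators

/-- `r` is a nonzerodivisor modulo the ideal `I`. -/
abbrev IsRegularModulo {A : Type*} [CommRing A] (I : Ideal A) (r : A) : Prop :=
  IsSMulRegular (A ⧸ I) r

namespace IsRegularModulo

variable {A : Type*} [CommRing A] {I : Ideal A} {a b r s : A}

lemma iff_mem_of_mul_mem : IsRegularModulo I r ↔ ∀ t, r * t ∈ I → t ∈ I :=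
  isSMulRegular_quotient_iff_mem_of_smul_mem I r

lemma of_notMem (hI : I.IsPrime) (hr : r ∉ I) : IsRegularModulo I r :=
  iff_mem_of_mul_mem.2 fun _ h => (hI.mem_or_mem h).resolve_left hr

lemma of_le {J : Ideal A} (hI : I.IsPrime) (hIJ : I ≤ J) (hJ : J ≠ ⊤) (hr : IsRegularModulo J r) :
    IsRegularModulo I r :=
  of_notMem hI fun hrI => hJ <| (Ideal.eq_top_iff_one J).2 <|
    iff_mem_of_mul_mem.1 hr 1 ((mul_one r).symm ▸ hIJ hrI)

lemma of_eq_add_mul (hs : IsRegularModulo I s) (ha : a ∈ I) (q : A) (hr : r = s + q * a) :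
    IsRegularModulo I r := by
  rw [iff_mem_of_mul_mem] at hs ⊢
  intro t ht
  have split : s * t = r * t - t * q * a := by rw [hr]; ring
  exact hs t (split ▸ sub_mem ht (I.mul_mem_left _ ha))

lemma const_smul {k : Type*} [Field k] [Algebra k A] {c : k} (hc : c ≠ 0)
    (hr : IsRegularModulo I r) : IsRegularModulo I (c • r) := by
  rw [Algebra.smul_def]
  exact ((hc.isUnit.map (algebraMap k A)).isSMulRegular _).mul hr

lemma swap (ha : IsRegularModulo I a) (hb : IsRegularModulo (Ideal.span {a} ⊔ I) b) :
    IsRegularModulo (Ideal.span {b} ⊔ I) a := by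
  simp only [iff_mem_of_mul_mem, Ideal.mem_span_singleton_sup] at ha hb ⊢
  rintro t ⟨u, i, hi, hu⟩
  obtain ⟨w, j, hj, rfl⟩ := hb u ⟨t, -i, neg_mem hi, by linear_combination -hu⟩
  refine ⟨w, t - w * b, ha _ ?_, by ring⟩
  have : a * (t - w * b) = i + b * j := by linear_combination -hu
  exact this ▸ add_mem hi (I.mul_mem_left b hj)

lemma span_mul (ha : IsRegularModulo I a) (hra : IsRegularModulo (Ideal.span {a} ⊔ I) r)
    (hrb : IsRegularModulo (Ideal.span {b} ⊔ I) r) :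
    IsRegularModulo (Ideal.span {a * b} ⊔ I) r := by
  simp only [iff_mem_of_mul_mem, Ideal.mem_span_singleton_sup] at ha hra hrb ⊢
  rintro t ⟨u, i, hi, hu⟩
  obtain ⟨w, j, hj, rfl⟩ := hra t ⟨u * b, i, hi, by linear_combination hu⟩
  have mul_mem : a * (r * w - u * b) ∈ I := by
    have : a * (r * w - u * b) = i - r * j := by linear_combination -hu
    exact this ▸ sub_mem hi (I.mul_mem_left r hj)
  obtain ⟨p, q, hq, rfl⟩ := hrb w ⟨u, _, ha _ mul_mem, by ring⟩
  exact ⟨p, a * q + j, add_mem (I.mul_mem_left a hq) hj, by ring⟩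

lemma isRegular_triple {c : A} (ha : IsRegularModulo ⊥ a) (hb : IsRegularModulo (Ideal.span {a}) b)
    (hc : IsRegularModulo (Ideal.span {a, b}) c) (hne : Ideal.span {a, b, c} ≠ ⊤) :
    RingTheory.Sequence.IsRegular A [a, b, c] := by
  have ofList_nil : Ideal.ofList ([] : List A) • (⊤ : Ideal A) = ⊥ := by simp
  have ofList_singleton : Ideal.ofList [a] • (⊤ : Ideal A) = Ideal.span {a} := by simp
  have ofList_pair : Ideal.ofList [a, b] • (⊤ : Ideal A) = Ideal.span {a, b} := by
    simp [Ideal.ofList_cons, Ideal.span_insert]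
  have ofList_triple : Ideal.ofList [a, b, c] • (⊤ : Ideal A) = Ideal.span {a, b, c} := by
    simp [Ideal.ofList_cons, Ideal.span_insert]
  refine ⟨(RingTheory.Sequence.isWeaklyRegular_iff_Fin A _).2 fun i => ?_, ?_⟩
  · fin_cases i
    · exact ofList_nil.symm ▸ ha
    · exact ofList_singleton.symm ▸ hb
    · exact ofList_pair.symm ▸ hc
  · exact ofList_triple.symm ▸ hne.symm

end IsRegularModulo

section RegularModuloVariables

variable {K : Type*} [Field K] {n : ℕ} {i j k : Fin n}

lemma isPrime_span_psX (j : Fin n) : (Ideal.span {psX (K := K) j}).IsPrime := by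
  simpa [psX] using isPrime_span_X_image (A := K) {j}

lemma isPrime_span_psX_sup (j k : Fin n) :
    (Ideal.span {psX (K := K) j} ⊔ Ideal.span {psX k}).IsPrime := by
  rw [← Ideal.span_insert]
  simpa [psX, Set.image_insert_eq] using isPrime_span_X_image (A := K) {j, k}

lemma isRegularModulo_psX_of_notMem {s : Finset (Fin n)} (hi : i ∉ s) :
    IsRegularModulo (Ideal.span (psX '' (s : Set (Fin n)))) (psX (K := K) i) :=
  .of_notMem (isPrime_span_X_image s) (mt (X_mem_span_X_image_iff s).1 hi)

lemma isRegularModulo_bot_psX (i : Fin n) : IsRegularModulo ⊥ (psX (K := K) i) := by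
  simpa using isRegularModulo_psX_of_notMem (K := K) (Finset.notMem_empty i)

lemma isRegularModulo_psX (hij : i ≠ j) :
    IsRegularModulo (Ideal.span {psX j}) (psX (K := K) i) := by
  simpa using isRegularModulo_psX_of_notMem (K := K) (Finset.notMem_singleton.2 hij)

lemma isRegularModulo_psX_sup (hij : i ≠ j) (hik : i ≠ k) :
    IsRegularModulo (Ideal.span {psX j} ⊔ Ideal.span {psX k}) (psX (K := K) i) := by
  rw [← Ideal.span_insert]
  simpa [Set.image_insert_eq] using
    isRegularModulo_psX_of_notMem (K := K) (s := {j, k}) (by simp [hij, hik])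

lemma isRegularModulo_span_psX_of_sup {r : MvPowerSeries (Fin n) K}
    (hr : IsRegularModulo (Ideal.span {psX k} ⊔ Ideal.span {psX j}) r) :
    IsRegularModulo (Ideal.span {psX j}) r :=
  .of_le (isPrime_span_psX j) le_sup_right (isPrime_span_psX_sup k j).ne_top hr

end RegularModuloVariables

section LegendreRegularity

variable {K : Type*} [Field K] {lam : K} {I : Ideal (MvPowerSeries (Fin 3) K)}

/-- The linear form `ℓ = λx₁ + (1+λ)x₃`, for which `H₂ ≡ x₃ℓ` modulo `x₂` and `H₁ ≡ (λ²-λ+1)x₃²`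
modulo `ℓ`. -/
noncomputable def legLinear (lam : K) : MvPowerSeries (Fin 3) K :=
  lam • psX 0 + (1 + lam) • psX 2

lemma isRegularModulo_legH1_of_psX_zero_mem (hj : lam ^ 2 - lam + 1 ≠ 0) (hx : psX 0 ∈ I)
    (hz : IsRegularModulo I (psX 2)) : IsRegularModulo I (legH1 lam) := by
  refine .of_eq_add_mul (.const_smul hj (hz.pow 2)) hx
    (lam ^ 2 • psX 0 + (lam * (1 + lam)) • psX 2) ?_
  unfold legH1
  algebra

lemma isRegularModulo_legH1_of_psX_two_mem (h0 : lam ≠ 0) (hz : psX 2 ∈ I)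
    (hx : IsRegularModulo I (psX 0)) : IsRegularModulo I (legH1 lam) := by
  refine .of_eq_add_mul (.const_smul (pow_ne_zero 2 h0) (hx.pow 2)) hz
    ((lam * (1 + lam)) • psX 0 + (lam ^ 2 - lam + 1) • psX 2) ?_
  unfold legH1
  algebra

lemma isRegularModulo_legH1_of_legLinear_mem (hj : lam ^ 2 - lam + 1 ≠ 0) (hl : legLinear lam ∈ I)
    (hz : IsRegularModulo I (psX 2)) : IsRegularModulo I (legH1 lam) := by
  refine .of_eq_add_mul (.const_smul hj (hz.pow 2)) hl (lam • psX 0) ?_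
  unfold legH1 legLinear
  algebra

lemma isRegularModulo_legH2_of_psX_two_mem (h0 : lam ≠ 0) (hz : psX 2 ∈ I)
    (hy : IsRegularModulo I (psX 1)) : IsRegularModulo I (legH2 lam) := by
  refine .of_eq_add_mul (.const_smul (pow_ne_zero 2 h0) (hy.pow 2)) hz
    (lam • psX 0 + (1 + lam) • psX 2) ?_
  unfold legH2
  algebra

lemma isRegularModulo_legH2_of_psX_one_mem (hy : psX 1 ∈ I) (hz : IsRegularModulo I (psX 2))
    (hl : IsRegularModulo I (legLinear lam)) : IsRegularModulo I (legH2 lam) := by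
  refine .of_eq_add_mul (hz.mul hl) hy (lam ^ 2 • psX 1) ?_
  unfold legH2 legLinear
  algebra

lemma isRegularModulo_legLinear_of_psX_two_mem (h0 : lam ≠ 0) (hz : psX 2 ∈ I)
    (hx : IsRegularModulo I (psX 0)) : IsRegularModulo I (legLinear lam) :=
  .of_eq_add_mul (.const_smul h0 hx) hz ((1 + lam) • 1) (by rw [smul_one_mul, legLinear])

lemma isRegularModulo_psX_zero_legH1 (hj : lam ^ 2 - lam + 1 ≠ 0) :
    IsRegularModulo (Ideal.span {psX 0}) (legH1 lam) :=
  isRegularModulo_legH1_of_psX_zero_mem hj (Ideal.mem_span_singleton_self _)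
    (isRegularModulo_psX (by decide))

lemma isRegularModulo_psX_two_sup_psX_one_legH1 (h0 : lam ≠ 0) :
    IsRegularModulo (Ideal.span {psX 2} ⊔ Ideal.span {psX 1}) (legH1 lam) :=
  isRegularModulo_legH1_of_psX_two_mem h0 (Ideal.mem_sup_left (Ideal.mem_span_singleton_self _))
    (isRegularModulo_psX_sup (by decide) (by decide))

lemma isRegularModulo_psX_zero_mul_psX_one_legH1 (h0 : lam ≠ 0) (hj : lam ^ 2 - lam + 1 ≠ 0) :
    IsRegularModulo (Ideal.span {psX 0 * psX 1}) (legH1 lam) := by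
  simpa using IsRegularModulo.span_mul (isRegularModulo_bot_psX 0)
    (by simpa using isRegularModulo_psX_zero_legH1 hj)
    (by simpa using isRegularModulo_span_psX_of_sup (isRegularModulo_psX_two_sup_psX_one_legH1 h0))

lemma isRegularModulo_legH1_sup_psX_zero_legH2 (h0 : lam ≠ 0) (hj : lam ^ 2 - lam + 1 ≠ 0) :
    IsRegularModulo (Ideal.span {legH1 lam} ⊔ Ideal.span {psX 0}) (legH2 lam) := by
  have modulo_zx : IsRegularModulo (Ideal.span {psX 2} ⊔ Ideal.span {psX 0}) (legH2 lam) :=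
    isRegularModulo_legH2_of_psX_two_mem h0 (Ideal.mem_sup_left (Ideal.mem_span_singleton_self _))
      (isRegularModulo_psX_sup (by decide) (by decide))
  exact (isRegularModulo_span_psX_of_sup modulo_zx).swap <|
    isRegularModulo_legH1_of_psX_zero_mem hj
      (Ideal.mem_sup_right (Ideal.mem_span_singleton_self _))
      ((isRegularModulo_psX (by decide)).swap modulo_zx)

lemma isRegularModulo_legH1_sup_psX_one_legLinear (h0 : lam ≠ 0) (hj : lam ^ 2 - lam + 1 ≠ 0) :
    IsRegularModulo (Ideal.span {legH1 lam} ⊔ Ideal.span {psX 1}) (legLinear lam) := by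
  have modulo_zy : IsRegularModulo (Ideal.span {psX 2} ⊔ Ideal.span {psX 1}) (legLinear lam) :=
    isRegularModulo_legLinear_of_psX_two_mem h0
      (Ideal.mem_sup_left (Ideal.mem_span_singleton_self _))
      (isRegularModulo_psX_sup (by decide) (by decide))
  exact (isRegularModulo_span_psX_of_sup modulo_zy).swap <|
    isRegularModulo_legH1_of_legLinear_mem hj (Ideal.mem_sup_left (Ideal.mem_span_singleton_self _))
      ((isRegularModulo_psX (by decide)).swap modulo_zy)

lemma isRegularModulo_legH1_sup_psX_one_legH2 (h0 : lam ≠ 0) (hj : lam ^ 2 - lam + 1 ≠ 0) :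
    IsRegularModulo (Ideal.span {legH1 lam} ⊔ Ideal.span {psX 1}) (legH2 lam) :=
  isRegularModulo_legH2_of_psX_one_mem (Ideal.mem_sup_right (Ideal.mem_span_singleton_self _))
    ((isRegularModulo_psX (by decide)).swap (isRegularModulo_psX_two_sup_psX_one_legH1 h0))
    (isRegularModulo_legH1_sup_psX_one_legLinear h0 hj)

lemma isRegularModulo_psX_zero_mul_psX_one_legH1_legH2 (h0 : lam ≠ 0)
    (hj : lam ^ 2 - lam + 1 ≠ 0) :
    IsRegularModulo (Ideal.span {psX 0 * psX 1, legH1 lam}) (legH2 lam) := by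
  have x_regular : IsRegularModulo (Ideal.span {legH1 lam}) (psX 0) := by
    simpa using (isRegularModulo_bot_psX 0).swap
      (by simpa using isRegularModulo_psX_zero_legH1 hj)
  rw [Ideal.span_insert]
  refine x_regular.span_mul ?_ ?_
  · exact sup_comm (Ideal.span {legH1 lam}) _ ▸ isRegularModulo_legH1_sup_psX_zero_legH2 h0 hj
  · exact sup_comm (Ideal.span {legH1 lam}) _ ▸ isRegularModulo_legH1_sup_psX_one_legH2 h0 hj

end LegendreRegularity

section LegendreCubic

variable {K : Type*} [Field K] {lam : K}

lemma legendreIdeal_ne_top (lam : K) : legendreIdeal lam ≠ ⊤ := by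
  refine ne_top_of_le_ne_top (RingHom.ker_ne_top (constantCoeff (σ := Fin 3) (R := K))) ?_
  rw [Ideal.span_le]
  rintro _ (rfl | rfl | rfl) <;>
    simp [legH1, legH2, psX, constantCoeff_smul]

lemma isRegular_legendreIdeal (h0 : lam ≠ 0) (hj : lam ^ 2 - lam + 1 ≠ 0) :
    RingTheory.Sequence.IsRegular (MvPowerSeries (Fin 3) K)
      [psX 0 * psX 1, legH1 lam, legH2 lam] :=
  IsRegularModulo.isRegular_triple ((isRegularModulo_bot_psX 0).mul (isRegularModulo_bot_psX 1))
    (isRegularModulo_psX_zero_mul_psX_one_legH1 h0 hj)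
    (isRegularModulo_psX_zero_mul_psX_one_legH1_legH2 h0 hj) (legendreIdeal_ne_top lam)

end LegendreCubic

theorem ann_legendre_cubic_general {K : Type*} [Field K] (h2 : (2 : K) ≠ 0) (lam : K)
    (h0 : lam ≠ 0) (hj : lam ^ 2 - lam + 1 ≠ 0) :
    annR (legendreCubic lam) =
      Ideal.span {psX 0 * psX 1, legH1 lam, legH2 lam} ∧
    RingTheory.Sequence.IsRegular (MvPowerSeries (Fin 3) K)
      [psX 0 * psX 1, legH1 lam, legH2 lam] ∧
    hilbQ (annR (legendreCubic lam)) 0 = 1 ∧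
    hilbQ (annR (legendreCubic lam)) 1 = 3 ∧
    hilbQ (annR (legendreCubic lam)) 2 = 3 ∧
    hilbQ (annR (legendreCubic lam)) 3 = 1 ∧
    mxR K 3 ^ 4 ≤ annR (legendreCubic lam) := by
  have dual := apolar_legendreBasis h2 h0
  have annR_eq : annR (legendreCubic lam) = legendreIdeal lam :=
    annR_eq_of_apolar_dual (isGradedGenerating_legendreBasis h0 hj) (legendreIdeal_le_annR lam) dual
  have generating : IsGradedGenerating (annR (legendreCubic lam)) (legendreBasis K) legendreDeg :=
    annR_eq ▸ isGradedGenerating_legendreBasis h0 hj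
  have hilbQ_eq (k : ℕ) : hilbQ (annR (legendreCubic lam)) k =
      Fintype.card {j // legendreDeg j = k} :=
    hilbQ_annR_eq_card (d := 3) (σ := Fin.rev) generating (by decide) dual k
  refine ⟨annR_eq, isRegular_legendreIdeal h0 hj, ?_, ?_, ?_, ?_,
    generating.mxR_pow_le_of_forall_deg_ne (by decide)⟩ <;> rw [hilbQ_eq] <;> rfl

/-- For `λ ∉ {0,1}` with `λ^2 - λ + 1 ≠ 0`, one has
`Ann_R(L_λ) = (x_1x_2, H_1, H_2)`; in particular this ideal is a complete
intersection (its three generators form a regular sequence in `R`) and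
`R/Ann_R(L_λ)` has Hilbert function `{1,3,3,1}`. -/
theorem ann_legendre_cubic
    {K : Type*} [Field K] [IsAlgClosed K] [CharZero K]
    (lam : K) (h0 : lam ≠ 0) (h1 : lam ≠ 1) (hj : lam ^ 2 - lam + 1 ≠ 0) :
    annR (legendreCubic lam) =
      Ideal.span {psX 0 * psX 1, legH1 lam, legH2 lam} ∧
    RingTheory.Sequence.IsRegular (MvPowerSeries (Fin 3) K)
      [psX 0 * psX 1, legH1 lam, legH2 lam] ∧
    hilbQ (annR (legendreCubic lam)) 0 = 1 ∧
    hilbQ (annR (legendreCubic lam)) 1 = 3 ∧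
    hilbQ (annR (legendreCubic lam)) 2 = 3 ∧
    hilbQ (annR (legendreCubic lam)) 3 = 1 ∧
    mxR K 3 ^ 4 ≤ annR (legendreCubic lam) :=
  ann_legendre_cubic_general two_ne_zero lam h0 hj
end

section
/- Let (A, m) be an Artinian Gorenstein local K-algebra with m^4 = 0 and HF_A(1) = n ≥ 3. Suppose A admits an exact zero divisor, i.e. a nonzero element a ∈ m such that the annihilator (0 : a) is a principal ideal. Then the Poincaré series of A, P^A_K(z) = Σ_{j≥0} dim_K Tor_j^A(K,K) z^j, is a rational function, and it equals the Poincaré series of the associated graded ring gr_m(A). -/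
/-- `dim_K` of the socle `(0 :_A m)` of `A = R/I`, where `m = M/I` is the
maximal ideal of `A`.  The Artinian local ring `A = R/I` is Gorenstein iff
this equals `1`. -/
noncomputable def socDimQ {K : Type*} [Field K] {n : ℕ}
    (I : Ideal (MvPowerSeries (Fin n) K)) : ℕ :=
  Module.finrank K
    ((Submodule.colon (⊥ : Ideal (MvPowerSeries (Fin n) K ⧸ I))
      ((mxR K n).map (Ideal.Quotient.mk I))).restrictScalars K)

/-- The total degree `|α| = α 1 + ⋯ + α n` of a multi-index. -/
def degM {n : ℕ} (α : Fin n →₀ ℕ) : ℕ := ∑ i, α i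

/-- The ideal `I^*` of `R` generated by the initial forms `f^*` of the elements
`f ∈ I` (for `f ≠ 0` of order `d`, `f^*` is the degree-`d` homogeneous component
of `f`; the set below consists of all such initial forms, together with `0`).
For an ideal `I` with `R/I` Artinian, `R/I^*` is (canonically isomorphic to) the
associated graded ring `gr_m(R/I) = ⊕_{i ≥ 0} m^i/m^(i+1)` of `A = R/I`. -/
noncomputable def initialIdeal {K : Type*} [Field K] {n : ℕ}
    (I : Ideal (MvPowerSeries (Fin n) K)) : Ideal (MvPowerSeries (Fin n) K) :=
  Ideal.span { g | ∃ f ∈ I, ∃ d : ℕ,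
    (∀ α : Fin n →₀ ℕ, degM α < d → MvPowerSeries.coeff α f = 0) ∧
    (∀ α : Fin n →₀ ℕ, MvPowerSeries.coeff α g =
      if degM α = d then MvPowerSeries.coeff α f else 0) }

open CategoryTheory in
/-- The `j`-th Betti number `dim_K Tor_j^A(K, K)` of `A = R/I`, where the
residue field `K = A/m` of `A` is realized as `R/(I + M)`. -/
noncomputable def bettiQ {K : Type*} [Field K] {n : ℕ}
    (I : Ideal (MvPowerSeries (Fin n) K)) (j : ℕ) : ℕ :=
  letI : Algebra (MvPowerSeries (Fin n) K ⧸ I)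
      (MvPowerSeries (Fin n) K ⧸ (I ⊔ mxR K n)) :=
    (Ideal.Quotient.factor (S := I) (T := I ⊔ mxR K n) le_sup_left).toAlgebra
  Module.finrank K (RestrictScalars K (MvPowerSeries (Fin n) K ⧸ I)
    (((Tor (ModuleCat (MvPowerSeries (Fin n) K ⧸ I)) j).obj
        (ModuleCat.of _ (MvPowerSeries (Fin n) K ⧸ (I ⊔ mxR K n)))).obj
      (ModuleCat.of _ (MvPowerSeries (Fin n) K ⧸ (I ⊔ mxR K n)))))

/-- A formal power series is rational if it is the power series expansion of a
quotient of two polynomials. -/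
def isRationalSeries (P : PowerSeries ℚ) : Prop :=
  ∃ p q : Polynomial ℚ, q ≠ 0 ∧ (q : PowerSeries ℚ) * P = (p : PowerSeries ℚ)

/-!
Let `(0 : a) = (b)` and `HF_A(1) = e + 3`. Both `A` and `gr_𝔪(A)` are Gorenstein with `𝔪⁴ = 0`,
embedding dimension `e + 3` and an exact zero divisor: the initial forms of a generator of the
socle, of `a` and of `b` play the same roles in `gr_𝔪(A)`. It therefore suffices to show that
`e` determines the Betti numbers `β j` of the residue field `k`.

Since `a` is a minimal generator of `𝔪`, the maps `Tor_j(A/(a), k) → Tor_j(k, k)` are injective with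
source of length one, whence `β (j + 1) = 1 + length Tor_j(b𝔪, k)`. The sequence
`(s) → b𝔪 → k ^ (e + 2)`, with `(s)` the socle, gives `1 + (e + 2) β (j + 1) ≤ β (j + 2) + β j`.
Conversely, `b𝔪` and the annihilators in `(b)` of elements of `𝔪` contain ideals `(x b)` of length
two with quotients killed by `𝔪`. This bounds the Betti numbers of `(x b)` and of `k` above by a
common recursion, for which the inequality just stated is an equality.
-/

section TorLongExactSequence

open CategoryTheory MonoidalCategory

universe u

variable {A : Type u} [CommRing A] (N : ModuleCat.{u} A)

/-- The complex `X ⊗ P` for a fixed projective resolution `P` of `N`, as a functor of `X`. Mathlib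
only makes `Tor` exact in the variable that is resolved; this functor gives the long exact sequences
in the other variable. -/
noncomputable def tensorResolution : ModuleCat.{u} A ⥤ ChainComplex (ModuleCat.{u} A) ℕ where
  obj X := (((tensoringLeft (ModuleCat.{u} A)).obj X).mapHomologicalComplex _).obj
    (projectiveResolution N).complex
  map f := (NatTrans.mapHomologicalComplex ((tensoringLeft (ModuleCat.{u} A)).map f) _).app _
  map_id X := by ext; simp
  map_comp f g := by ext; simp

instance tensorResolution_additive : (tensorResolution N).Additive where
  map_add := by
    intro X Y f g
    ext i : 1
    simp only [tensorResolution, Functor.map_add]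
    rfl

lemma tensorResolution_shortExact {S : ShortComplex (ModuleCat.{u} A)} (hS : S.ShortExact) :
    (S.map (tensorResolution N)).ShortExact := by
  refine HomologicalComplex.shortExact_of_degreewise_shortExact _ fun i => ?_
  have hproj : Module.Projective A ((projectiveResolution N).complex.X i) :=
    (IsProjective.iff_projective (R := A) _).mpr ((projectiveResolution N).projective i)
  apply ModuleCat.shortComplex_shortExact
  · exact rTensor_exact _ ((ShortComplex.ShortExact.moduleCat_exact_iff_function_exact _).mp
      hS.exact) hS.moduleCat_surjective_g
  · exact Module.Flat.rTensor_preserves_injective_linearMap S.f.hom hS.moduleCat_injective_f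
  · exact LinearMap.rTensor_surjective _ hS.moduleCat_surjective_g

/-- `Tor_j(X, N)`, as a functor of `X`. -/
noncomputable def torFunctor (j : ℕ) : ModuleCat.{u} A ⥤ ModuleCat.{u} A :=
  tensorResolution N ⋙ HomologicalComplex.homologyFunctor _ _ j

instance torFunctor_additive (j : ℕ) : (torFunctor N j).Additive :=
  inferInstanceAs (tensorResolution N ⋙ HomologicalComplex.homologyFunctor _ _ j).Additive

/-- `torFunctor` computes Mathlib's `Tor`. -/
noncomputable def torIsoTorFunctor (j : ℕ) (X : ModuleCat.{u} A) :
    ((Tor (ModuleCat.{u} A) j).obj X).obj N ≅ (torFunctor N j).obj X :=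
  (projectiveResolution N).isoLeftDerivedObj ((tensoringLeft (ModuleCat.{u} A)).obj X) j

/-- `Tor_0(X, N)` is the tensor product `X ⊗ N`. -/
noncomputable def torFunctorZeroIso (X : ModuleCat.{u} A) : (torFunctor N 0).obj X ≅ X ⊗ N :=
  haveI : Limits.PreservesFiniteColimits ((tensoringLeft (ModuleCat.{u} A)).obj X) :=
    inferInstanceAs (Limits.PreservesFiniteColimits (tensorLeft X))
  (torIsoTorFunctor N 0 X).symm ≪≫
    (((tensoringLeft (ModuleCat.{u} A)).obj X).leftDerivedZeroIsoSelf).app N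

/-- Tensoring the projective resolution of `N` with the ring itself changes nothing. -/
noncomputable def tensorResolutionUnitIso :
    (tensorResolution N).obj (𝟙_ _) ≅ (projectiveResolution N).complex :=
  (NatIso.mapHomologicalComplex (leftUnitorNatIso (ModuleCat.{u} A)) _).app _ ≪≫
    (Functor.mapHomologicalComplexIdIso _ _).app _

variable {X Y Z X' Y' Z' : Type u} [AddCommGroup X] [Module A X] [AddCommGroup Y] [Module A Y]
  [AddCommGroup Z] [Module A Z] [AddCommGroup X'] [Module A X'] [AddCommGroup Y'] [Module A Y']
  [AddCommGroup Z'] [Module A Z']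

/-- `Tor_j(X, N)` for an unbundled module `X`. -/
noncomputable abbrev torObj (j : ℕ) (X : Type u) [AddCommGroup X] [Module A X] : ModuleCat.{u} A :=
  (torFunctor N j).obj (ModuleCat.of A X)

/-- The map `Tor_j(f, N)`. -/
noncomputable def torMap (j : ℕ) (f : X →ₗ[A] Y) : torObj N j X →ₗ[A] torObj N j Y :=
  ((torFunctor N j).map (ModuleCat.ofHom f)).hom

lemma subsingleton_torObj_succ_self (j : ℕ) : Subsingleton (torObj N (j + 1) A) :=
  ModuleCat.subsingleton_of_isZero <|
    ((projectiveResolution N).complex_exactAt_succ j).isZero_homology.of_iso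
      ((HomologicalComplex.homologyFunctor _ _ (j + 1)).mapIso (tensorResolutionUnitIso N))

lemma torMap_comp (j : ℕ) (f : X →ₗ[A] Y) (g : Y →ₗ[A] Z) :
    torMap N j (g ∘ₗ f) = torMap N j g ∘ₗ torMap N j f := by
  simp [torMap]

lemma torMap_id (j : ℕ) : torMap N j (LinearMap.id : X →ₗ[A] X) = LinearMap.id := by
  simp [torMap]

lemma torMap_zero (j : ℕ) : torMap N j (0 : X →ₗ[A] Y) = 0 :=
  congrArg ModuleCat.Hom.hom ((torFunctor N j).map_zero (ModuleCat.of A X) (ModuleCat.of A Y))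

/-- `0 → X → Y → Z → 0` is exact; `ShortComplex.ShortExact` for unbundled linear maps. -/
structure IsShortExact (f : X →ₗ[A] Y) (g : Y →ₗ[A] Z) : Prop where
  injective : Function.Injective f
  exact : Function.Exact f g
  surjective : Function.Surjective g

namespace IsShortExact

variable {f : X →ₗ[A] Y} {g : Y →ₗ[A] Z} {f' : X' →ₗ[A] Y'} {g' : Y' →ₗ[A] Z'}

lemma mkQ_subtype (L : Submodule A X) : IsShortExact L.subtype L.mkQ :=
  ⟨L.injective_subtype, LinearMap.exact_subtype_mkQ L, L.mkQ_surjective⟩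

lemma inclusion {N N' : Submodule A X} (hle : N ≤ N') :
    IsShortExact (Submodule.inclusion hle) (N.submoduleOf N').mkQ :=
  ⟨Submodule.inclusion_injective hle, LinearMap.exact_iff.mpr <| by
      rw [Submodule.ker_mkQ, Submodule.range_inclusion]; rfl,
    Submodule.mkQ_surjective _⟩

lemma length_eq (h : IsShortExact f g) :
    Module.length A Y = Module.length A X + Module.length A Z :=
  Module.length_eq_add_of_exact f g h.injective h.surjective h.exact

/-- The bundled short complex of a short exact pair of linear maps. -/
def shortComplex (h : IsShortExact f g) : ShortComplex (ModuleCat.{u} A) :=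
  ShortComplex.mk (ModuleCat.ofHom f) (ModuleCat.ofHom g) (by
    ext x; exact (h.exact (f x)).mpr ⟨x, rfl⟩)

lemma shortExact_shortComplex (h : IsShortExact f g) : h.shortComplex.ShortExact :=
  ModuleCat.shortComplex_shortExact _ h.exact h.injective h.surjective

lemma shortExact_tensorResolution (h : IsShortExact f g) :
    (h.shortComplex.map (tensorResolution N)).ShortExact :=
  tensorResolution_shortExact N h.shortExact_shortComplex

/-- The connecting map `Tor_{j+1}(Z, N) → Tor_j(X, N)`. -/
noncomputable def connecting (h : IsShortExact f g) (j : ℕ) :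
    torObj N (j + 1) Z →ₗ[A] torObj N j X :=
  ((h.shortExact_tensorResolution N).δ (j + 1) j (by simp)).hom

lemma torMap_exact (h : IsShortExact f g) (j : ℕ) :
    Function.Exact (torMap N j f) (torMap N j g) :=
  (ShortComplex.ShortExact.moduleCat_exact_iff_function_exact _).mp
    ((h.shortExact_tensorResolution N).homology_exact₂ j)

lemma exact_torMap_connecting (h : IsShortExact f g) (j : ℕ) :
    Function.Exact (torMap N (j + 1) g) (h.connecting N j) :=
  (ShortComplex.ShortExact.moduleCat_exact_iff_function_exact _).mp
    ((h.shortExact_tensorResolution N).homology_exact₃ (j + 1) j (by simp))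

lemma exact_connecting_torMap (h : IsShortExact f g) (j : ℕ) :
    Function.Exact (h.connecting N j) (torMap N j f) :=
  (ShortComplex.ShortExact.moduleCat_exact_iff_function_exact _).mp
    ((h.shortExact_tensorResolution N).homology_exact₁ (j + 1) j (by simp))

lemma torMap_zero_surjective (h : IsShortExact f g) : Function.Surjective (torMap N 0 g) := by
  have := (h.shortExact_tensorResolution N).epi_g
  exact (ModuleCat.epi_iff_surjective _).mp
    (HomologicalComplex.epi_homologyMap_of_epi_of_not_rel
      (h.shortComplex.map (tensorResolution N)).g 0 (by simp))

lemma connecting_comp_torMap (h : IsShortExact f g) (h' : IsShortExact f' g')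
    {u : X →ₗ[A] X'} {v : Y →ₗ[A] Y'} {w : Z →ₗ[A] Z'} (huv : f' ∘ₗ u = v ∘ₗ f)
    (hvw : g' ∘ₗ v = w ∘ₗ g) (j : ℕ) :
    h'.connecting N j ∘ₗ torMap N (j + 1) w = torMap N j u ∘ₗ h.connecting N j := by
  let φ : h.shortComplex ⟶ h'.shortComplex :=
    { τ₁ := ModuleCat.ofHom u
      τ₂ := ModuleCat.ofHom v
      τ₃ := ModuleCat.ofHom w
      comm₁₂ := by ext x; exact LinearMap.congr_fun huv x
      comm₂₃ := by ext x; exact LinearMap.congr_fun hvw x }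
  exact (congrArg ModuleCat.Hom.hom (HomologicalComplex.HomologySequence.δ_naturality
    ((tensorResolution N).mapShortComplex.map φ) (h.shortExact_tensorResolution N)
    (h'.shortExact_tensorResolution N) (j + 1) j (by simp))).symm

lemma connecting_injective (h : IsShortExact f g) {j : ℕ} (hY : Subsingleton (torObj N (j + 1) Y)) :
    Function.Injective (h.connecting N j) := by
  rw [injective_iff_map_eq_zero]
  intro z hz
  obtain ⟨y, rfl⟩ := (h.exact_torMap_connecting N j z).mp hz
  rw [Subsingleton.elim y 0, map_zero]

lemma connecting_surjective (h : IsShortExact f g) {j : ℕ}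
    (hg : Function.Injective (torMap N j g)) : Function.Surjective (h.connecting N j) := by
  intro x
  refine (h.exact_connecting_torMap N j x).mp (hg ?_)
  rw [map_zero]
  exact (h.torMap_exact N j _).mpr ⟨x, rfl⟩

lemma torMap_succ_injective (h : IsShortExact f g) (h' : IsShortExact f' g')
    {u : X →ₗ[A] X'} {v : Y →ₗ[A] Y'} {w : Z →ₗ[A] Z'} (huv : f' ∘ₗ u = v ∘ₗ f)
    (hvw : g' ∘ₗ v = w ∘ₗ g) {j : ℕ} (hY : Subsingleton (torObj N (j + 1) Y))
    (hu : Function.Injective (torMap N j u)) : Function.Injective (torMap N (j + 1) w) := by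
  have hcomp : Function.Injective (h'.connecting N j ∘ₗ torMap N (j + 1) w) := by
    rw [h.connecting_comp_torMap N h' huv hvw]
    exact hu.comp (h.connecting_injective N hY)
  exact Function.Injective.of_comp (f := h'.connecting N j) hcomp

lemma torMap_surjective (h : IsShortExact f g) (hf : ∀ j, Function.Injective (torMap N j f)) :
    ∀ j, Function.Surjective (torMap N j g)
  | 0 => h.torMap_zero_surjective N
  | j + 1 => fun z => by
    refine (h.exact_torMap_connecting N j z).mp (hf j ?_)
    rw [map_zero]
    exact (h.exact_connecting_torMap N j _).mpr ⟨z, rfl⟩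

end IsShortExact

/-- The length of `Tor_j(X, N)`. -/
noncomputable def torLength (j : ℕ) (X : Type u) [AddCommGroup X] [Module A X] : ℕ∞ :=
  Module.length A (torObj N j X)

lemma torLength_congr (j : ℕ) (e : X ≃ₗ[A] Y) : torLength N j X = torLength N j Y :=
  ((torFunctor N j).mapIso e.toModuleIso).toLinearEquiv.length_eq

lemma torLength_of_subsingleton (j : ℕ) [Subsingleton X] : torLength N j X = 0 := by
  have hid : (LinearMap.id : torObj N j X →ₗ[A] torObj N j X) = 0 := by
    rw [← torMap_id, Subsingleton.elim (LinearMap.id : X →ₗ[A] X) 0, torMap_zero]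
  exact Module.length_eq_zero_iff.mpr
    (subsingleton_of_forall_eq 0 fun x => LinearMap.congr_fun hid x)

lemma length_le_of_exact {f : X →ₗ[A] Y} {g : Y →ₗ[A] Z} (h : Function.Exact f g) :
    Module.length A Y ≤ Module.length A X + Module.length A Z := by
  rw [(IsShortExact.mk (LinearMap.ker g).injective_subtype (by intro y; simp [Subtype.ext_iff])
    g.surjective_rangeRestrict : IsShortExact (LinearMap.ker g).subtype g.rangeRestrict).length_eq,
    LinearMap.exact_iff.mp h]
  exact add_le_add (Module.length_le_of_surjective _ f.surjective_rangeRestrict)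
    (Module.length_le_of_injective _ (LinearMap.range g).injective_subtype)

lemma injective_of_surjective_of_length_le {f : X →ₗ[A] Y} (hf : Function.Surjective f)
    (hle : Module.length A X ≤ Module.length A Y) (hY : Module.length A Y ≠ ⊤) :
    Function.Injective f := by
  have hadd := IsShortExact.length_eq
    ⟨(LinearMap.ker f).injective_subtype, f.exact_subtype_ker_map, hf⟩
  have hker : Module.length A (LinearMap.ker f) = 0 := by
    refine le_zero_iff.mp ((ENat.add_le_add_iff_right hY).mp ?_)
    rwa [← hadd, zero_add]
  rw [← LinearMap.ker_eq_bot, ← Submodule.subsingleton_iff_eq_bot]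
  exact Module.length_eq_zero_iff.mp hker

namespace IsShortExact

variable {f : X →ₗ[A] Y} {g : Y →ₗ[A] Z}

lemma torLength_middle_le (h : IsShortExact f g) (j : ℕ) :
    torLength N j Y ≤ torLength N j X + torLength N j Z :=
  length_le_of_exact (h.torMap_exact N j)

lemma torLength_succ_right_le (h : IsShortExact f g) (j : ℕ) :
    torLength N (j + 1) Z ≤ torLength N (j + 1) Y + torLength N j X :=
  length_le_of_exact (h.exact_torMap_connecting N j)

lemma torLength_zero_right_le (h : IsShortExact f g) : torLength N 0 Z ≤ torLength N 0 Y :=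
  Module.length_le_of_surjective _ (h.torMap_zero_surjective N)

lemma torLength_middle_eq (h : IsShortExact f g) (hf : ∀ j, Function.Injective (torMap N j f))
    (j : ℕ) : torLength N j Y = torLength N j X + torLength N j Z :=
  Module.length_eq_add_of_exact _ _ (hf j) (h.torMap_surjective N hf j) (h.torMap_exact N j)

lemma torLength_succ_right_eq (h : IsShortExact f g) {j : ℕ}
    (hY : Subsingleton (torObj N (j + 1) Y)) (hg : Function.Injective (torMap N j g)) :
    torLength N (j + 1) Z = torLength N j X :=
  (LinearEquiv.ofBijective (h.connecting N j)
    ⟨h.connecting_injective N hY, h.connecting_surjective N hg⟩).length_eq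

end IsShortExact

lemma torLength_prod (j : ℕ) : torLength N j (X × Y) = torLength N j X + torLength N j Y := by
  have h : IsShortExact (LinearMap.inl A X Y) (LinearMap.snd A X Y) :=
    ⟨LinearMap.inl_injective, Function.Exact.inl_snd, LinearMap.snd_surjective⟩
  refine h.torLength_middle_eq N (fun j => ?_) j
  have hsplit : torMap N j (LinearMap.fst A X Y) ∘ₗ torMap N j (LinearMap.inl A X Y) =
      LinearMap.id := by
    rw [← torMap_comp, LinearMap.fst_comp_inl, torMap_id]
  exact Function.LeftInverse.injective (LinearMap.congr_fun hsplit)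

lemma torLength_pow (j d : ℕ) : torLength N j (Fin d → X) = d * torLength N j X := by
  induction d with
  | zero => rw [torLength_of_subsingleton, Nat.cast_zero, zero_mul]
  | succ d ih =>
    rw [← torLength_congr N j (Fin.consLinearEquiv A fun _ : Fin (d + 1) => X), torLength_prod, ih,
      Nat.cast_succ, add_mul, one_mul, add_comm]

end TorLongExactSequence

section Betti

open CategoryTheory IsLocalRing

universe u

variable (A : Type u) [CommRing A] [IsLocalRing A]

/-- The `j`-th Betti number `length Tor_j(X, k)` of a module `X` over a local ring with residue
field `k`. -/
noncomputable abbrev betti (j : ℕ) (X : Type u) [AddCommGroup X] [Module A X] : ℕ∞ :=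
  torLength (ModuleCat.of A (ResidueField A)) j X

variable {A} {X Y Z : Type u} [AddCommGroup X] [Module A X] [AddCommGroup Y] [Module A Y]
  [AddCommGroup Z] [Module A Z]

/-- The map `Tor_j(f, k)`, where `k` is the residue field. -/
noncomputable abbrev residueTorMap (j : ℕ) (f : X →ₗ[A] Y) :=
  torMap (ModuleCat.of A (ResidueField A)) j f

variable (A) in
lemma length_residueField : Module.length A (ResidueField A) = 1 :=
  (Module.length_eq_of_surjective (S := A) (R := ResidueField A) residue_surjective).trans
    (Module.length_eq_one _ _)

lemma betti_zero : betti A 0 X = Module.length A (X ⧸ (maximalIdeal A • ⊤ : Submodule A X)) :=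
  ((torFunctorZeroIso (ModuleCat.of A (ResidueField A)) (ModuleCat.of A X)).toLinearEquiv.trans
    (TensorProduct.tensorQuotEquivQuotSMul X (maximalIdeal A))).length_eq

variable (A) in
lemma betti_zero_self : betti A 0 A = 1 := by
  rw [betti_zero, Ideal.smul_top_eq_map, Algebra.algebraMap_self, Ideal.map_id]
  exact length_residueField A

variable (A) in
lemma isShortExact_maximalIdeal : IsShortExact (Submodule.subtype (maximalIdeal A))
    (Algebra.linearMap A (ResidueField A)) :=
  IsShortExact.mkQ_subtype (maximalIdeal A)

variable (A) in
lemma betti_zero_residueField : betti A 0 (ResidueField A) = 1 := by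
  have hbot : (maximalIdeal A • ⊤ : Submodule A (ResidueField A)) = ⊥ :=
    Submodule.le_annihilator_iff.mp <| by
      rw [Submodule.annihilator_top]; exact (Ideal.annihilator_quotient (I := maximalIdeal A)).ge
  rw [betti_zero, (Submodule.quotEquivOfEqBot _ hbot).length_eq, length_residueField]

variable (A) in
lemma residueTorMap_algebraLinearMap_injective :
    ∀ j, Function.Injective (residueTorMap j (Algebra.linearMap A (ResidueField A)))
  | 0 => by
    have hses := isShortExact_maximalIdeal A
    have hself : torLength _ 0 A = 1 := betti_zero_self A
    have hres : torLength _ 0 (ResidueField A) = 1 := betti_zero_residueField A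
    exact injective_of_surjective_of_length_le (hses.torMap_zero_surjective _)
      (hself.trans hres.symm).le (hres.trans_ne ENat.one_ne_top)
  | j + 1 => have := subsingleton_torObj_succ_self (ModuleCat.of A (ResidueField A)) j
    Function.injective_of_subsingleton _

variable (A) in
lemma betti_succ_residueField (j : ℕ) :
    betti A (j + 1) (ResidueField A) = betti A j (maximalIdeal A) :=
  (isShortExact_maximalIdeal A).torLength_succ_right_eq _ (subsingleton_torObj_succ_self _ j)
    (residueTorMap_algebraLinearMap_injective A j)

lemma betti_of_isTorsionBySet [Module.Finite A X]
    (hX : Module.IsTorsionBySet A X (maximalIdeal A : Set A)) (j : ℕ) :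
    betti A j X = Module.length A X * betti A j (ResidueField A) := by
  let _ : Module (ResidueField A) X := hX.module
  have : IsScalarTower A (ResidueField A) X := hX.isScalarTower
  have : Module.Finite (ResidueField A) X := Module.Finite.of_restrictScalars_finite A _ X
  let e := (Module.finBasis (ResidueField A) X).equivFun.restrictScalars A
  rw [betti, torLength_congr _ j e, torLength_pow, e.length_eq, Module.length_pi_of_fintype]
  simp only [length_residueField, Finset.sum_const, Finset.card_univ, Fintype.card_fin,
    nsmul_eq_mul, mul_one]

section FiniteLength

variable [IsNoetherian A X] [IsArtinian A X] {N N' : Submodule A X}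

lemma betti_quot_of_smul_le (hle : N ≤ N') (hsmul : maximalIdeal A • N' ≤ N) {d : ℕ∞}
    (hd : Module.length A N' = Module.length A N + d) (j : ℕ) :
    betti A j (N' ⧸ N.submoduleOf N') = d * betti A j (ResidueField A) := by
  have htorsion : Module.IsTorsionBySet A (N' ⧸ N.submoduleOf N') (maximalIdeal A : Set A) :=
    (Module.isTorsionBySet_quotient_iff _ _).mpr fun x r hr =>
      hsmul (Submodule.smul_mem_smul hr x.2)
  have hlength : Module.length A (N' ⧸ N.submoduleOf N') = d :=
    ENat.add_right_injective_of_ne_top Module.length_ne_top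
      ((IsShortExact.inclusion hle).length_eq.symm.trans hd)
  rw [betti_of_isTorsionBySet htorsion, hlength]

lemma betti_le_of_smul_le (hle : N ≤ N') (hsmul : maximalIdeal A • N' ≤ N) {d : ℕ∞}
    (hd : Module.length A N' = Module.length A N + d) (j : ℕ) :
    betti A j N' ≤ betti A j N + d * betti A j (ResidueField A) :=
  ((IsShortExact.inclusion hle).torLength_middle_le _ j).trans_eq
    (congrArg _ (betti_quot_of_smul_le hle hsmul hd j))

lemma mul_betti_succ_residueField_le (hle : N ≤ N') (hsmul : maximalIdeal A • N' ≤ N) {d : ℕ∞}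
    (hd : Module.length A N' = Module.length A N + d) (j : ℕ) :
    d * betti A (j + 1) (ResidueField A) ≤ betti A (j + 1) N' + betti A j N :=
  (betti_quot_of_smul_le hle hsmul hd (j + 1)).symm.trans_le
    ((IsShortExact.inclusion hle).torLength_succ_right_le _ j)

lemma le_betti_zero (hle : N ≤ N') (hsmul : maximalIdeal A • N' ≤ N) {d : ℕ∞}
    (hd : Module.length A N' = Module.length A N + d) : d ≤ betti A 0 N' := by
  have hquot := betti_quot_of_smul_le hle hsmul hd 0
  rw [betti_zero_residueField, mul_one] at hquot
  exact hquot.symm.trans_le ((IsShortExact.inclusion hle).torLength_zero_right_le _)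

end FiniteLength

end Betti

section ExactPair

open CategoryTheory IsLocalRing

universe u

variable {A : Type u} [CommRing A] [IsLocalRing A] {a b : A}

/-- `(a, b)` is an exact pair of zero divisors, `(0 : a) = (b)` and `(0 : b) = (a)`, both of which
are minimal generators of the maximal ideal. -/
structure IsMinimalExactPair (a b : A) : Prop where
  left_mem : a ∈ maximalIdeal A
  right_mem : b ∈ maximalIdeal A
  left_notMem_sq : a ∉ maximalIdeal A ^ 2
  right_notMem_sq : b ∉ maximalIdeal A ^ 2
  mul_left_eq_zero_iff : ∀ r, a * r = 0 ↔ r ∈ Ideal.span {b}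
  mul_right_eq_zero_iff : ∀ r, b * r = 0 ↔ r ∈ Ideal.span {a}

lemma exists_maximalIdeal_functional (ha : a ∈ maximalIdeal A) (ha2 : a ∉ maximalIdeal A ^ 2) :
    ∃ φ : maximalIdeal A →ₗ[A] ResidueField A, φ ⟨a, ha⟩ = 1 := by
  have hne : (maximalIdeal A).toCotangent ⟨a, ha⟩ ≠ 0 := by
    rwa [Ne, Ideal.toCotangent_eq_zero]
  obtain ⟨φ, hφ⟩ := Module.Projective.exists_dual_eq_one (ResidueField A)
    (V := CotangentSpace A) hne
  exact ⟨φ.restrictScalars A ∘ₗ (maximalIdeal A).toCotangent, hφ⟩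

namespace IsMinimalExactPair

lemma symm (h : IsMinimalExactPair a b) : IsMinimalExactPair b a :=
  ⟨h.right_mem, h.left_mem, h.right_notMem_sq, h.left_notMem_sq, h.mul_right_eq_zero_iff,
    h.mul_left_eq_zero_iff⟩

lemma ker_mulLeft (h : IsMinimalExactPair a b) : LinearMap.ker (LinearMap.mulLeft A a) =
    Ideal.span {b} := by
  ext r
  exact h.mul_left_eq_zero_iff r

/-- Multiplication by `a` as an injection `A/(b) → A`. -/
def mulQuot (h : IsMinimalExactPair a b) : (A ⧸ Ideal.span {b}) →ₗ[A] A :=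
  Submodule.liftQ (Ideal.span {b}) (LinearMap.mulLeft A a) h.ker_mulLeft.ge

lemma mulQuot_injective (h : IsMinimalExactPair a b) : Function.Injective h.mulQuot :=
  LinearMap.ker_eq_bot.mp (Submodule.ker_liftQ_eq_bot _ _ _ h.ker_mulLeft.le)

lemma range_mulQuot (h : IsMinimalExactPair a b) : LinearMap.range h.mulQuot = Ideal.span {a} := by
  rw [mulQuot, Submodule.range_liftQ]
  ext r
  simp only [LinearMap.mem_range, LinearMap.mulLeft_apply, Ideal.mem_span_singleton', mul_comm a]

lemma isShortExact_mulQuot (h : IsMinimalExactPair a b) :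
    IsShortExact h.mulQuot (Submodule.mkQ (Ideal.span {a})) :=
  ⟨h.mulQuot_injective, LinearMap.exact_iff.mpr (by rw [Submodule.ker_mkQ, range_mulQuot]),
    Submodule.mkQ_surjective _⟩

lemma mulQuot_mem (h : IsMinimalExactPair a b) (x : A ⧸ Ideal.span {b}) :
    h.mulQuot x ∈ maximalIdeal A :=
  (Ideal.span_singleton_le_iff_mem _).mpr h.left_mem
    (h.range_mulQuot ▸ LinearMap.mem_range_self _ x)

/-- Multiplication by `a` as an injection `A/(b) → 𝔪`. -/
def mulQuotMaximalIdeal (h : IsMinimalExactPair a b) :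
    (A ⧸ Ideal.span {b}) →ₗ[A] maximalIdeal A :=
  h.mulQuot.codRestrict (maximalIdeal A) h.mulQuot_mem

lemma isShortExact_mulQuotMaximalIdeal (h : IsMinimalExactPair a b) :
    IsShortExact h.mulQuotMaximalIdeal ((LinearMap.mulLeft A b).submoduleMap (maximalIdeal A)) where
  injective := fun x y hxy => h.mulQuot_injective (congrArg Subtype.val hxy)
  exact := fun x => by
    rw [Subtype.ext_iff]
    refine (h.mul_right_eq_zero_iff x).trans ?_
    rw [← h.range_mulQuot, LinearMap.mem_range, Set.mem_range]
    exact exists_congr fun y => (Subtype.ext_iff (a1 := h.mulQuotMaximalIdeal y)).symm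
  surjective := LinearMap.submoduleMap_surjective _ _

/-- The projection `A/(a) → k`. -/
noncomputable def quotToResidue (h : IsMinimalExactPair a b) :
    (A ⧸ Ideal.span {a}) →ₗ[A] ResidueField A :=
  Submodule.liftQ (Ideal.span {a}) (Algebra.linearMap A (ResidueField A)) <| by
    rw [Ideal.span_singleton_le_iff_mem]
    exact (residue_eq_zero_iff a).mpr h.left_mem

lemma quotToResidue_comp_mkQ (h : IsMinimalExactPair a b) :
    h.quotToResidue ∘ₗ Submodule.mkQ (Ideal.span {a}) = Algebra.linearMap A (ResidueField A) :=
  Submodule.liftQ_mkQ _ _ _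

lemma residueTorMap_mulQuotMaximalIdeal_injective (h : IsMinimalExactPair a b) {j : ℕ}
    (hj : Function.Injective (residueTorMap j h.symm.quotToResidue)) :
    Function.Injective (residueTorMap j h.mulQuotMaximalIdeal) := by
  obtain ⟨φ, hφ⟩ := exists_maximalIdeal_functional h.left_mem h.left_notMem_sq
  have hcomp : φ ∘ₗ h.mulQuotMaximalIdeal = h.symm.quotToResidue := by
    refine Submodule.linearMap_qext _ (LinearMap.ext_ring ?_)
    have hone : h.mulQuotMaximalIdeal (Submodule.mkQ _ 1) = ⟨a, h.left_mem⟩ :=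
      Subtype.ext (mul_one a)
    calc φ (h.mulQuotMaximalIdeal (Submodule.mkQ _ 1)) = 1 := by rw [hone, hφ]
      _ = algebraMap A (ResidueField A) 1 := (map_one _).symm
  rw [← hcomp, residueTorMap, torMap_comp] at hj
  exact Function.Injective.of_comp (f := residueTorMap j φ) hj

lemma residueTorMap_quotToResidue_injective :
    ∀ (j : ℕ) {a b : A} (h : IsMinimalExactPair a b),
      Function.Injective (residueTorMap j h.quotToResidue)
  | 0, _, _, h => by
    have hinj := residueTorMap_algebraLinearMap_injective A 0
    rw [← h.quotToResidue_comp_mkQ, residueTorMap, torMap_comp] at hinj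
    exact Function.Injective.of_comp_right (f := residueTorMap 0 h.quotToResidue) hinj
      (h.isShortExact_mulQuot.torMap_zero_surjective _)
  | j + 1, a, b, h =>
    h.isShortExact_mulQuot.torMap_succ_injective _ (isShortExact_maximalIdeal A)
      (u := h.mulQuotMaximalIdeal) (v := LinearMap.id) rfl
      h.quotToResidue_comp_mkQ.symm (subsingleton_torObj_succ_self _ j)
      (h.residueTorMap_mulQuotMaximalIdeal_injective
        (residueTorMap_quotToResidue_injective j h.symm))

lemma residueTorMap_mkQ_injective (h : IsMinimalExactPair a b) (j : ℕ) :
    Function.Injective (residueTorMap j (Submodule.mkQ (Ideal.span {a}))) := by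
  have hinj := residueTorMap_algebraLinearMap_injective A j
  rw [← h.quotToResidue_comp_mkQ, residueTorMap, torMap_comp] at hinj
  exact Function.Injective.of_comp (f := residueTorMap j h.quotToResidue) hinj

lemma betti_quot_eq_one : ∀ (j : ℕ) {a b : A}, IsMinimalExactPair a b →
    betti A j (A ⧸ Ideal.span {a}) = 1
  | 0, _, _, h => by
    rw [← betti_zero_self A]
    exact (LinearEquiv.ofBijective (residueTorMap 0 (Submodule.mkQ _))
      ⟨h.residueTorMap_mkQ_injective 0, h.isShortExact_mulQuot.torMap_zero_surjective _⟩
      ).length_eq.symm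
  | j + 1, _, _, h =>
    (h.isShortExact_mulQuot.torLength_succ_right_eq _ (subsingleton_torObj_succ_self _ j)
      (h.residueTorMap_mkQ_injective j)).trans (betti_quot_eq_one j h.symm)

lemma betti_span_singleton_eq_one (h : IsMinimalExactPair a b) (j : ℕ) :
    betti A j (Ideal.span {a}) = 1 := by
  rw [← h.range_mulQuot, ← betti_quot_eq_one j h.symm]
  exact (torLength_congr _ j (LinearEquiv.ofInjective _ h.mulQuot_injective)).symm

lemma betti_succ_residueField (h : IsMinimalExactPair a b) (j : ℕ) :
    betti A (j + 1) (ResidueField A) =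
      1 + betti A j (Submodule.map (LinearMap.mulLeft A b) (maximalIdeal A)) := by
  rw [_root_.betti_succ_residueField, ← betti_quot_eq_one j h.symm]
  exact h.isShortExact_mulQuotMaximalIdeal.torLength_middle_eq _
    (fun i => h.residueTorMap_mulQuotMaximalIdeal_injective
      (residueTorMap_quotToResidue_injective i h.symm)) j

end IsMinimalExactPair

end ExactPair

section LengthOfSubmodules

open IsLocalRing

universe u

variable {A : Type u} [CommRing A] {X Y : Type u} [AddCommGroup X] [Module A X] [AddCommGroup Y]
  [Module A Y]

lemma IsShortExact.submoduleMap (f : X →ₗ[A] Y) (L : Submodule A X) :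
    IsShortExact (Submodule.inclusion (inf_le_left : L ⊓ LinearMap.ker f ≤ L))
      (f.submoduleMap L) where
  injective := Submodule.inclusion_injective _
  exact := LinearMap.exact_iff.mpr <| by
    rw [Submodule.range_inclusion]
    ext x
    simp only [LinearMap.mem_ker, Subtype.ext_iff, LinearMap.submoduleMap_coe_apply,
      ZeroMemClass.coe_zero, Submodule.mem_comap, Submodule.subtype_apply, Submodule.mem_inf,
      SetLike.coe_mem, true_and]
  surjective := LinearMap.submoduleMap_surjective _ _

lemma length_eq_length_inf_ker_add_length_map (f : X →ₗ[A] Y) (L : Submodule A X) :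
    Module.length A L = Module.length A ↥(L ⊓ LinearMap.ker f) + Module.length A (L.map f) :=
  (IsShortExact.submoduleMap f L).length_eq

lemma length_mono {L L' : Submodule A X} (hle : L ≤ L') : Module.length A L ≤ Module.length A L' :=
  Module.length_le_of_injective _ (Submodule.inclusion_injective hle)

lemma eq_of_le_of_length_le [IsNoetherian A X] [IsArtinian A X] {L L' : Submodule A X}
    (hle : L ≤ L') (hlength : Module.length A L' ≤ Module.length A L) : L = L' := by
  by_contra hne
  have hlt := Submodule.height_strictMono (lt_of_le_of_ne hle hne)
  rw [← Module.length_submodule, ← Module.length_submodule] at hlt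
  exact hlt.not_ge hlength

lemma map_mulLeft_span_singleton (x y : A) :
    Submodule.map (LinearMap.mulLeft A x) (Ideal.span {y}) = Ideal.span {x * y} := by
  rw [Ideal.span, Submodule.map_span, Set.image_singleton, LinearMap.mulLeft_apply]

lemma length_eq_length_ker_mulLeft_add (x : A) :
    Module.length A A =
      Module.length A (LinearMap.ker (LinearMap.mulLeft A x)) +
        Module.length A (Ideal.span {x}) := by
  have h := length_eq_length_inf_ker_add_length_map (LinearMap.mulLeft A x) (Ideal.span {1})
  rwa [map_mulLeft_span_singleton, mul_one, Ideal.span_singleton_one, top_inf_eq,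
    Module.length_top] at h

lemma mul_right_eq_zero_iff_of_mul_left_eq_zero_iff [IsArtinianRing A] {a b : A}
    (hab : ∀ r, a * r = 0 ↔ r ∈ Ideal.span {b}) (r : A) : b * r = 0 ↔ r ∈ Ideal.span {a} := by
  have hker : LinearMap.ker (LinearMap.mulLeft A a) = Ideal.span {b} := Submodule.ext hab
  have hle : Ideal.span {a} ≤ LinearMap.ker (LinearMap.mulLeft A b) := by
    rw [Ideal.span_singleton_le_iff_mem, LinearMap.mem_ker, LinearMap.mulLeft_apply, mul_comm]
    exact (hab b).mpr (Ideal.mem_span_singleton_self b)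
  have ha := length_eq_length_ker_mulLeft_add a
  have hb := length_eq_length_ker_mulLeft_add b
  rw [ha, hker, add_comm] at hb
  have hlength := ENat.add_left_injective_of_ne_top Module.length_ne_top hb
  exact (SetLike.ext_iff.mp (eq_of_le_of_length_le hle hlength.ge) r).symm

section Local

variable [IsLocalRing A]

lemma length_span_singleton_eq_one {x : X} (hx0 : x ≠ 0)
    (hx : ∀ r ∈ maximalIdeal A, r • x = 0) : Module.length A (Submodule.span A {x}) = 1 := by
  have htorsion : Ideal.torsionOf A X x = maximalIdeal A :=
    le_antisymm (le_maximalIdeal fun htop =>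
      hx0 ((Ideal.torsionOf_eq_top_iff (R := A) x).mp htop)) hx
  rw [← (Ideal.quotTorsionOfEquivSpanSingleton A X x).length_eq, htorsion]
  exact length_residueField A

lemma length_sup_span_singleton {L : Submodule A X} {x : X} (hxL : x ∉ L)
    (hx : ∀ r ∈ maximalIdeal A, r • x ∈ L) :
    Module.length A ↥(L ⊔ Submodule.span A {x}) = Module.length A L + 1 := by
  have hx0 : L.mkQ x ≠ 0 := by
    rwa [Submodule.mkQ_apply, Ne, Submodule.Quotient.mk_eq_zero]
  have hquot : Module.length A (Submodule.span A {L.mkQ x}) = 1 :=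
    length_span_singleton_eq_one hx0 fun r hr => by
      rw [← map_smul, Submodule.mkQ_apply, Submodule.Quotient.mk_eq_zero]
      exact hx r hr
  rw [length_eq_length_inf_ker_add_length_map L.mkQ, Submodule.map_sup, Submodule.mkQ_map_self,
    bot_sup_eq, Submodule.map_span, Set.image_singleton, hquot, Submodule.ker_mkQ,
    inf_eq_right.mpr le_sup_left]

lemma length_span_singleton_le_add_one {L : Submodule A X} {x : X}
    (hx : ∀ r ∈ maximalIdeal A, r • x ∈ L) :
    Module.length A (Submodule.span A {x}) ≤ Module.length A L + 1 := by
  by_cases hxL : x ∈ L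
  · exact (length_mono ((Submodule.span_singleton_le_iff_mem x L).mpr hxL)).trans le_self_add
  · exact (length_mono le_sup_right).trans (length_sup_span_singleton hxL hx).le

lemma span_inf_ker_mulLeft_le {x b : A} (hxb : x * b ≠ 0) :
    Ideal.span {b} ⊓ LinearMap.ker (LinearMap.mulLeft A x) ≤
      Submodule.map (LinearMap.mulLeft A b) (maximalIdeal A) := by
  rintro _ ⟨hz, hxz⟩
  obtain ⟨r, rfl⟩ := Ideal.mem_span_singleton'.mp hz
  refine ⟨r, by_contra fun hunit => hxb ?_, mul_comm b r⟩
  rwa [SetLike.mem_coe, LinearMap.mem_ker, LinearMap.mulLeft_apply, mul_left_comm,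
    IsUnit.mul_right_eq_zero (notMem_maximalIdeal.mp hunit)] at hxz

end Local

end LengthOfSubmodules

section ExactGorenstein

open IsLocalRing

universe u

variable {A : Type u} [CommRing A] [IsLocalRing A]

/-- A Gorenstein local ring with maximal ideal `𝔪`, `𝔪⁴ = 0` and embedding dimension `e + 3`, in
which `s` generates the socle and `a` is an exact zero divisor with `(0 : a) = (b)`. -/
structure IsExactGorenstein (e : ℕ) (s a b : A) : Prop where
  maximalIdeal_pow_four : maximalIdeal A ^ 4 = ⊥
  mem_span_socle_iff : ∀ r, r ∈ Ideal.span {s} ↔ ∀ x ∈ maximalIdeal A, x * r = 0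
  socle_ne_zero : s ≠ 0
  length_quot_sq : Module.length A (A ⧸ maximalIdeal A ^ 2) = e + 4
  left_ne_zero : a ≠ 0
  left_mem : a ∈ maximalIdeal A
  mul_left_eq_zero_iff : ∀ r, a * r = 0 ↔ r ∈ Ideal.span {b}

/-- The upper bounds for the Betti numbers of the cyclic ideals `(x * b)` (first component) and of
the residue field (second component) of a ring as in `IsExactGorenstein e`. -/
def bettiBounds (e : ℕ) : ℕ → ℕ × ℕ
  | 0 => (1, 1)
  | j + 1 => (1 + (bettiBounds e j).1 + e * (bettiBounds e j).2,
      1 + (bettiBounds e j).1 + (e + 1) * (bettiBounds e j).2)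

lemma bettiBounds_one (e : ℕ) : (bettiBounds e 1).2 = e + 3 := by
  simp only [bettiBounds]
  ring

lemma bettiBounds_add_two (e j : ℕ) : (bettiBounds e (j + 2)).2 + (bettiBounds e j).2 =
    1 + (e + 2) * (bettiBounds e (j + 1)).2 := by
  simp only [bettiBounds]
  ring

namespace IsExactGorenstein

variable {e : ℕ} {s a b : A}

lemma right_mem (h : IsExactGorenstein e s a b) : b ∈ maximalIdeal A := by
  refine le_maximalIdeal (J := Ideal.span {b}) (fun htop => h.left_ne_zero ?_)
    (Ideal.mem_span_singleton_self b)
  rw [← mul_one a, h.mul_left_eq_zero_iff, htop]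
  exact Submodule.mem_top

lemma mul_socle_eq_zero (h : IsExactGorenstein e s a b) {x : A} (hx : x ∈ maximalIdeal A) :
    x * s = 0 :=
  (h.mem_span_socle_iff s).mp (Ideal.mem_span_singleton_self s) x hx

lemma mul_eq_zero_of_mem_pow (h : IsExactGorenstein e s a b) {i j : ℕ} (hij : 4 ≤ i + j) {x y : A}
    (hx : x ∈ maximalIdeal A ^ i) (hy : y ∈ maximalIdeal A ^ j) : x * y = 0 := by
  have hxy := Ideal.pow_le_pow_right hij (pow_add (maximalIdeal A) i j ▸ Ideal.mul_mem_mul hx hy)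
  rwa [h.maximalIdeal_pow_four] at hxy

lemma socle_mem_span_of_pow_mul_eq_zero (h : IsExactGorenstein e s a b) :
    ∀ (k : ℕ) {r : A}, r ≠ 0 → (∀ x ∈ maximalIdeal A ^ k, x * r = 0) → s ∈ Ideal.span {r}
  | 0, r, hr, hk =>
    absurd (one_mul r ▸ hk 1 (by rw [pow_zero, Ideal.one_eq_top]; exact Submodule.mem_top)) hr
  | k + 1, r, hr, hk => by
    by_cases hsoc : ∀ x ∈ maximalIdeal A, x * r = 0
    · obtain ⟨c, rfl⟩ := Ideal.mem_span_singleton'.mp ((h.mem_span_socle_iff r).mpr hsoc)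
      have hc : IsUnit c := by
        by_contra hc
        exact hr (h.mul_socle_eq_zero hc)
      rw [(Ideal.span_singleton_mul_left_unit hc s)]
      exact Ideal.mem_span_singleton_self s
    · push Not at hsoc
      obtain ⟨x, hx, hxr⟩ := hsoc
      have hs := h.socle_mem_span_of_pow_mul_eq_zero k hxr fun y hy => by
        rw [← mul_assoc]
        exact hk _ (pow_succ (maximalIdeal A) k ▸ Ideal.mul_mem_mul hy hx)
      exact Ideal.span_singleton_le_span_singleton.mpr (Dvd.intro_left x rfl) hs

lemma socle_mem_span (h : IsExactGorenstein e s a b) {r : A} (hr : r ≠ 0) : s ∈ Ideal.span {r} :=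
  h.socle_mem_span_of_pow_mul_eq_zero 4 hr fun x hx => by
    rw [h.maximalIdeal_pow_four] at hx
    rw [(Submodule.mem_bot A).mp hx, zero_mul]

lemma length_span_socle (h : IsExactGorenstein e s a b) : Module.length A (Ideal.span {s}) = 1 :=
  length_span_singleton_eq_one h.socle_ne_zero fun _ hr => h.mul_socle_eq_zero hr

lemma right_ne_zero (h : IsExactGorenstein e s a b) : b ≠ 0 := by
  rintro rfl
  have hs := (h.mul_left_eq_zero_iff s).mp (h.mul_socle_eq_zero h.left_mem)
  rw [Ideal.span_singleton_zero] at hs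
  exact h.socle_ne_zero hs

lemma length_eq (h : IsExactGorenstein e s a b) :
    Module.length A A = Module.length A ↥(maximalIdeal A ^ 2) + (e + 4) := by
  rw [← h.length_quot_sq]
  exact (IsShortExact.mkQ_subtype _).length_eq

lemma ker_mulLeft (h : IsExactGorenstein e s a b) :
    LinearMap.ker (LinearMap.mulLeft A a) = Ideal.span {b} :=
  Submodule.ext h.mul_left_eq_zero_iff

lemma length_eq_add (h : IsExactGorenstein e s a b) :
    Module.length A A = Module.length A (Ideal.span {b}) + Module.length A (Ideal.span {a}) := by
  rw [length_eq_length_ker_mulLeft_add a, h.ker_mulLeft]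

lemma betti_span_socle (h : IsExactGorenstein e s a b) (j : ℕ) :
    betti A j (Ideal.span {s}) = betti A j (ResidueField A) := by
  have htorsion : Module.IsTorsionBySet A (Ideal.span {s}) (maximalIdeal A : Set A) :=
    fun x r => Subtype.ext ((h.mem_span_socle_iff _).mp x.2 _ r.2)
  rw [betti_of_isTorsionBySet htorsion, h.length_span_socle, one_mul]

lemma span_socle_le_span_mul (h : IsExactGorenstein e s a b) {x : A}
    (hxb : x * b ∉ Ideal.span {s}) :
    Ideal.span {s} ≤ Ideal.span {x * b} :=
  (Ideal.span_singleton_le_iff_mem _).mpr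
    (h.socle_mem_span fun hzero => hxb (hzero ▸ Ideal.zero_mem _))

lemma exists_mem_mul_mem_of_one_lt_length (h : IsExactGorenstein e s a b) {N : Ideal A}
    (hle : N ≤ Submodule.map (LinearMap.mulLeft A b) (maximalIdeal A))
    (hN : 1 < Module.length A N) : ∃ y ∈ maximalIdeal A, y * b ∈ N ∧ y * b ∉ Ideal.span {s} := by
  have hnot : ¬N ≤ Ideal.span {s} := fun hNs =>
    (length_mono hNs).not_gt (h.length_span_socle ▸ hN)
  obtain ⟨z, hzN, hzs⟩ := SetLike.not_le_iff_exists.mp hnot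
  obtain ⟨y, hy, rfl⟩ := hle hzN
  rw [LinearMap.mulLeft_apply, mul_comm] at hzN hzs
  exact ⟨y, hy, hzN, hzs⟩

section Artinian

variable [IsArtinianRing A]

lemma symm (h : IsExactGorenstein e s a b) : IsExactGorenstein e s b a where
  __ := h
  left_ne_zero := h.right_ne_zero
  left_mem := h.right_mem
  mul_left_eq_zero_iff := mul_right_eq_zero_iff_of_mul_left_eq_zero_iff h.mul_left_eq_zero_iff

/-- If `a𝔪² = 0` then `(a)` and `(b)` are too short to add up to the length of `A`. -/
lemma exists_mem_sq_mul_ne_zero (h : IsExactGorenstein e s a b) :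
    ∃ w ∈ maximalIdeal A ^ 2, a * w ≠ 0 := by
  by_contra! hzero
  have ha : Module.length A (Ideal.span {a}) ≤ Module.length A (Ideal.span {s}) + 1 :=
    length_span_singleton_le_add_one fun r hr => (h.mem_span_socle_iff _).mpr fun x hx => by
      rw [smul_eq_mul, ← mul_assoc, mul_comm]
      exact hzero _ (pow_two (maximalIdeal A) ▸ Ideal.mul_mem_mul hx hr)
  have hb : Module.length A (Ideal.span {b}) ≤ Module.length A ↥(maximalIdeal A ^ 2) + 1 :=
    length_span_singleton_le_add_one fun r hr =>
      pow_two (maximalIdeal A) ▸ Ideal.mul_mem_mul hr h.right_mem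
  have hlength := h.length_eq.symm.trans h.length_eq_add
  rw [h.length_span_socle] at ha
  have hle : Module.length A ↥(maximalIdeal A ^ 2) + (e + 4) ≤
      Module.length A ↥(maximalIdeal A ^ 2) + 3 :=
    hlength.trans_le ((add_le_add hb ha).trans_eq (by ring))
  rw [ENat.add_le_add_iff_left Module.length_ne_top] at hle
  exact absurd hle (by norm_cast)

lemma exists_mem_sq_mul_eq_socle (h : IsExactGorenstein e s a b) :
    ∃ w ∈ maximalIdeal A ^ 2, a * w = s := by
  obtain ⟨v, hv, hav⟩ := h.exists_mem_sq_mul_ne_zero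
  obtain ⟨c, hc⟩ := Ideal.mem_span_singleton'.mp (h.socle_mem_span hav)
  exact ⟨c * v, Ideal.mul_mem_left _ c hv, by rw [← hc, mul_left_comm]⟩

lemma maximalIdeal_pow_three (h : IsExactGorenstein e s a b) :
    maximalIdeal A ^ 3 = Ideal.span {s} := by
  refine le_antisymm (fun r hr => (h.mem_span_socle_iff r).mpr fun x hx => ?_) ?_
  · exact h.mul_eq_zero_of_mem_pow (i := 1) le_rfl (by rwa [pow_one]) hr
  · obtain ⟨w, hw, rfl⟩ := h.exists_mem_sq_mul_eq_socle
    rw [Ideal.span_singleton_le_iff_mem, pow_succ']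
    exact Ideal.mul_mem_mul h.left_mem hw

lemma left_notMem_sq (h : IsExactGorenstein e s a b) : a ∉ maximalIdeal A ^ 2 := fun ha => by
  obtain ⟨w, hw, haw⟩ := h.exists_mem_sq_mul_ne_zero
  exact haw (h.mul_eq_zero_of_mem_pow le_rfl ha hw)

lemma isMinimalExactPair (h : IsExactGorenstein e s a b) : IsMinimalExactPair a b :=
  ⟨h.left_mem, h.right_mem, h.left_notMem_sq, h.symm.left_notMem_sq, h.mul_left_eq_zero_iff,
    h.symm.mul_left_eq_zero_iff⟩

lemma mem_sq_of_mul_sq_eq_zero (h : IsExactGorenstein e s a b) {v : A}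
    (hv : ∀ x ∈ maximalIdeal A ^ 2, v * x = 0) : v ∈ maximalIdeal A ^ 2 := by
  obtain ⟨w, hw, haw⟩ := h.exists_mem_sq_mul_eq_socle
  have hav : a * v ∈ Ideal.span {s} := (h.mem_span_socle_iff _).mpr fun x hx => by
    rw [← mul_assoc, mul_comm]
    exact hv _ (pow_two (maximalIdeal A) ▸ Ideal.mul_mem_mul hx h.left_mem)
  obtain ⟨c, hc⟩ := Ideal.mem_span_singleton'.mp hav
  have hvcw : v - c * w ∈ Ideal.span {b} := by
    rw [← h.mul_left_eq_zero_iff, mul_sub, ← hc, ← haw, mul_left_comm, sub_self]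
  obtain ⟨r, hr⟩ := Ideal.mem_span_singleton'.mp hvcw
  obtain ⟨x, hx, hbx⟩ := h.symm.exists_mem_sq_mul_ne_zero
  have hr_mem : r ∈ maximalIdeal A := by
    by_contra hunit
    refine hbx ((IsUnit.mul_right_eq_zero (notMem_maximalIdeal.mp hunit)).mp ?_)
    rw [← mul_assoc, hr, sub_mul, hv x hx, mul_assoc, h.mul_eq_zero_of_mem_pow le_rfl hw hx,
      mul_zero, sub_zero]
  rw [← sub_add_cancel v (c * w), ← hr, pow_two]
  exact add_mem (Ideal.mul_mem_mul hr_mem h.right_mem)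
    (Ideal.mul_mem_left _ c (pow_two (maximalIdeal A) ▸ hw))

lemma mem_pow_succ_of_forall_mul_mem (h : IsExactGorenstein e s a b) {d : ℕ} (hd : d ≤ 2) {x : A}
    (hx : ∀ y ∈ maximalIdeal A, x * y ∈ maximalIdeal A ^ (d + 2)) :
    x ∈ maximalIdeal A ^ (d + 1) := by
  interval_cases d
  · rw [zero_add, pow_one]
    by_contra hunit
    exact h.left_notMem_sq <|
      (Ideal.unit_mul_mem_iff_mem _ (notMem_maximalIdeal.mp hunit)).mp (hx a h.left_mem)
  · refine h.mem_sq_of_mul_sq_eq_zero fun z hz => ?_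
    rw [pow_two] at hz
    refine Submodule.mul_induction_on hz (fun y hy y' hy' => ?_) fun y y' hy hy' => by
      rw [mul_add, hy, hy', add_zero]
    rw [← mul_assoc]
    exact h.mul_eq_zero_of_mem_pow (j := 1) le_rfl (hx y hy) (by rwa [pow_one])
  · rw [h.maximalIdeal_pow_three, h.mem_span_socle_iff]
    intro y hy
    have hxy := hx y hy
    rw [h.maximalIdeal_pow_four, Ideal.mem_bot] at hxy
    rw [mul_comm, hxy]

lemma exists_mem_pow_mul_eq (h : IsExactGorenstein e s a b) (i : ℕ) {x : A}
    (hx : a * x ∈ maximalIdeal A ^ (i + 1)) : ∃ y ∈ maximalIdeal A ^ i, a * y = a * x := by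
  match i with
  | 0 => exact ⟨x, by rw [pow_zero, Ideal.one_eq_top]; exact Submodule.mem_top, rfl⟩
  | 1 =>
    refine ⟨x, ?_, rfl⟩
    rw [pow_one]
    by_contra hunit
    exact h.left_notMem_sq
      ((Ideal.mul_unit_mem_iff_mem _ (notMem_maximalIdeal.mp hunit)).mp hx)
  | 2 =>
    rw [h.maximalIdeal_pow_three] at hx
    obtain ⟨c, hc⟩ := Ideal.mem_span_singleton'.mp hx
    obtain ⟨w, hw, haw⟩ := h.exists_mem_sq_mul_eq_socle
    exact ⟨c * w, Ideal.mul_mem_left _ c hw, by rw [← hc, ← haw, mul_left_comm]⟩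
  | i + 3 =>
    refine ⟨0, zero_mem _, ?_⟩
    have hzero := Ideal.pow_le_pow_right (Nat.le_add_left 4 i) hx
    rw [h.maximalIdeal_pow_four, Ideal.mem_bot] at hzero
    rw [hzero, mul_zero]

lemma map_mulLeft_sq (h : IsExactGorenstein e s a b) :
    Submodule.map (LinearMap.mulLeft A a) (maximalIdeal A ^ 2) = Ideal.span {s} := by
  refine le_antisymm ?_ ?_
  · rintro _ ⟨x, hx, rfl⟩
    rw [← h.maximalIdeal_pow_three, pow_succ']
    exact Ideal.mul_mem_mul h.left_mem hx
  · obtain ⟨w, hw, rfl⟩ := h.exists_mem_sq_mul_eq_socle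
    rw [Ideal.span_singleton_le_iff_mem]
    exact ⟨w, hw, rfl⟩

/-- Both sides are one less than the length of `𝔪² + (a)`. -/
lemma length_span_left_eq_length_sq (h : IsExactGorenstein e s a b) :
    Module.length A (Ideal.span {a}) = Module.length A ↥(maximalIdeal A ^ 2) := by
  have hsq : Module.length A ↥(maximalIdeal A ^ 2 ⊔ Ideal.span {a}) =
      Module.length A ↥(maximalIdeal A ^ 2) + 1 :=
    length_sup_span_singleton h.left_notMem_sq fun r hr =>
      pow_two (maximalIdeal A) ▸ Ideal.mul_mem_mul hr h.left_mem
  have hb := length_eq_length_inf_ker_add_length_map (LinearMap.mulLeft A b)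
    (maximalIdeal A ^ 2 ⊔ Ideal.span {a})
  rw [h.symm.ker_mulLeft, inf_eq_right.mpr le_sup_right, Submodule.map_sup, h.symm.map_mulLeft_sq,
    map_mulLeft_span_singleton, mul_comm b, (h.mul_left_eq_zero_iff b).mpr
      (Ideal.mem_span_singleton_self b), Ideal.span_singleton_zero, sup_bot_eq,
    h.length_span_socle, hsq] at hb
  exact ENat.add_left_injective_of_ne_top ENat.one_ne_top hb.symm

lemma length_span_right (h : IsExactGorenstein e s a b) :
    Module.length A (Ideal.span {b}) = e + 4 := by
  have hlength := h.length_eq_add.symm.trans h.length_eq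
  rw [h.length_span_left_eq_length_sq, add_comm] at hlength
  exact ENat.add_right_injective_of_ne_top Module.length_ne_top hlength

lemma length_map_mulLeft_maximalIdeal (h : IsExactGorenstein e s a b) :
    Module.length A (Submodule.map (LinearMap.mulLeft A b) (maximalIdeal A)) = e + 3 := by
  have hm := (isShortExact_maximalIdeal A).length_eq
  have hb := length_eq_length_inf_ker_add_length_map (LinearMap.mulLeft A b) (maximalIdeal A)
  rw [h.symm.ker_mulLeft, inf_eq_right.mpr
    ((Ideal.span_singleton_le_iff_mem _).mpr h.left_mem)] at hb
  rw [hb, length_residueField, h.length_eq_add, h.length_span_right, add_comm, add_assoc] at hm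
  have hsub := ENat.add_right_injective_of_ne_top Module.length_ne_top hm
  have hfour : (e + 4 : ℕ∞) = e + 3 + 1 := by rw [add_assoc]; norm_num
  exact ENat.add_left_injective_of_ne_top ENat.one_ne_top (hsub.symm.trans hfour)

lemma length_map_mulLeft_eq_length_socle_add (h : IsExactGorenstein e s a b) :
    Module.length A (Submodule.map (LinearMap.mulLeft A b) (maximalIdeal A)) =
      Module.length A (Ideal.span {s}) + (e + 2) := by
  rw [h.length_map_mulLeft_maximalIdeal, h.length_span_socle, add_left_comm]
  norm_num

lemma span_socle_le_map_mulLeft (h : IsExactGorenstein e s a b) :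
    Ideal.span {s} ≤ Submodule.map (LinearMap.mulLeft A b) (maximalIdeal A) := by
  rw [← h.symm.map_mulLeft_sq]
  exact Submodule.map_mono (Ideal.pow_le_self two_ne_zero)

lemma smul_map_mulLeft_le (h : IsExactGorenstein e s a b) :
    maximalIdeal A • Submodule.map (LinearMap.mulLeft A b) (maximalIdeal A) ≤ Ideal.span {s} := by
  rw [Submodule.smul_le]
  rintro r hr _ ⟨x, hx, rfl⟩
  rw [← h.maximalIdeal_pow_three, pow_succ', pow_two]
  exact Ideal.mul_mem_mul hr (Ideal.mul_mem_mul h.right_mem hx)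

section Multiple

variable {x : A}

lemma length_span_mul (h : IsExactGorenstein e s a b) (hx : x ∈ maximalIdeal A)
    (hxb : x * b ∉ Ideal.span {s}) : Module.length A (Ideal.span {x * b}) = 2 := by
  have hsup := length_sup_span_singleton hxb fun r hr => by
    rw [← h.maximalIdeal_pow_three, pow_succ', pow_two]
    exact Ideal.mul_mem_mul hr (Ideal.mul_mem_mul hx h.right_mem)
  rw [sup_eq_right.mpr (h.span_socle_le_span_mul hxb), h.length_span_socle, one_add_one_eq_two]
    at hsup
  exact hsup

lemma length_inf_ker_mulLeft (h : IsExactGorenstein e s a b) (hx : x ∈ maximalIdeal A)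
    (hxb : x * b ∉ Ideal.span {s}) :
    Module.length A ↥(Ideal.span {b} ⊓ LinearMap.ker (LinearMap.mulLeft A x)) = e + 2 := by
  have hlength := length_eq_length_inf_ker_add_length_map (LinearMap.mulLeft A x) (Ideal.span {b})
  have hfour : (e + 4 : ℕ∞) = e + 2 + 2 := by rw [add_assoc]; norm_num
  rw [map_mulLeft_span_singleton, h.length_span_mul hx hxb, h.length_span_right, hfour] at hlength
  exact (ENat.add_left_injective_of_ne_top (ENat.ofNat_ne_top 2) hlength).symm

lemma betti_zero_span_mul_le (h : IsExactGorenstein e s a b) (x : A) :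
    betti A 0 (Ideal.span {x * b}) ≤ 1 := by
  rw [← h.symm.isMinimalExactPair.betti_span_singleton_eq_one 0, ← map_mulLeft_span_singleton]
  exact (IsShortExact.submoduleMap _ _).torLength_zero_right_le _

lemma betti_succ_span_mul_le (h : IsExactGorenstein e s a b) (hx : x ∈ maximalIdeal A)
    (hxb : x * b ∉ Ideal.span {s}) (j : ℕ) : ∃ y ∈ maximalIdeal A, y * b ∉ Ideal.span {s} ∧
      betti A (j + 1) (Ideal.span {x * b}) ≤
        1 + (betti A j (Ideal.span {y * b}) + e * betti A j (ResidueField A)) := by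
  have hle := span_inf_ker_mulLeft_le fun hzero => hxb (hzero ▸ Ideal.zero_mem (Ideal.span {s}))
  have hlength := h.length_inf_ker_mulLeft hx hxb
  obtain ⟨y, hy, hyN, hys⟩ := h.exists_mem_mul_mem_of_one_lt_length hle <| by
    rw [hlength]; exact_mod_cast Nat.lt_add_left e one_lt_two
  refine ⟨y, hy, hys, ?_⟩
  have hN := betti_le_of_smul_le ((Ideal.span_singleton_le_iff_mem _).mpr hyN)
    ((Submodule.smul_mono le_rfl hle).trans
      (h.smul_map_mulLeft_le.trans (h.span_socle_le_span_mul hys)))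
    (by rw [hlength, h.length_span_mul hy hys, add_comm]) j
  rw [← h.symm.isMinimalExactPair.betti_span_singleton_eq_one (j + 1),
    ← map_mulLeft_span_singleton x b]
  exact ((IsShortExact.submoduleMap _ _).torLength_succ_right_le _ j).trans (add_le_add_right hN _)

lemma betti_succ_residueField_le (h : IsExactGorenstein e s a b) (hx : x ∈ maximalIdeal A)
    (hxb : x * b ∉ Ideal.span {s}) (j : ℕ) : betti A (j + 1) (ResidueField A) ≤
      1 + (betti A j (Ideal.span {x * b}) + (e + 1) * betti A j (ResidueField A)) := by
  rw [h.isMinimalExactPair.betti_succ_residueField]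
  refine add_le_add_right (betti_le_of_smul_le ?_
    (h.smul_map_mulLeft_le.trans (h.span_socle_le_span_mul hxb)) ?_ j) _
  · rw [Ideal.span_singleton_le_iff_mem]
    exact ⟨x, hx, mul_comm b x⟩
  · rw [h.length_map_mulLeft_maximalIdeal, h.length_span_mul hx hxb, add_left_comm,
      two_add_one_eq_three]

end Multiple

lemma betti_le_bettiBounds (h : IsExactGorenstein e s a b) (j : ℕ) :
    (∀ x ∈ maximalIdeal A, x * b ∉ Ideal.span {s} →
      betti A j (Ideal.span {x * b}) ≤ (bettiBounds e j).1) ∧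
    betti A j (ResidueField A) ≤ (bettiBounds e j).2 := by
  induction j with
  | zero =>
    exact ⟨fun x _ _ => h.betti_zero_span_mul_le x, (betti_zero_residueField A).le⟩
  | succ j ih =>
    obtain ⟨ihcyclic, ihres⟩ := ih
    refine ⟨fun x hx hxb => ?_, ?_⟩
    · obtain ⟨y, hy, hys, hle⟩ := h.betti_succ_span_mul_le hx hxb j
      simp only [bettiBounds, Nat.cast_add, Nat.cast_mul, Nat.cast_one, add_assoc]
      exact hle.trans (by gcongr; exact ihcyclic y hy hys)
    · obtain ⟨y, hy, -, hys⟩ := h.exists_mem_mul_mem_of_one_lt_length le_rfl <| by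
        rw [h.length_map_mulLeft_maximalIdeal]; exact_mod_cast Nat.lt_add_left e (by norm_num)
      simp only [bettiBounds, Nat.cast_add, Nat.cast_mul, Nat.cast_one, add_assoc]
      exact (h.betti_succ_residueField_le hy hys j).trans (by gcongr; exact ihcyclic y hy hys)

lemma one_add_mul_betti_le (h : IsExactGorenstein e s a b) (j : ℕ) :
    1 + (e + 2) * betti A (j + 1) (ResidueField A) ≤
      betti A (j + 2) (ResidueField A) + betti A j (ResidueField A) := by
  rw [h.isMinimalExactPair.betti_succ_residueField (j + 1), add_assoc, ← h.betti_span_socle j]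
  exact add_le_add_right (mul_betti_succ_residueField_le h.span_socle_le_map_mulLeft
    h.smul_map_mulLeft_le h.length_map_mulLeft_eq_length_socle_add j) _

lemma add_three_le_betti_one (h : IsExactGorenstein e s a b) :
    (e + 3 : ℕ∞) ≤ betti A 1 (ResidueField A) := by
  have hle := le_betti_zero h.span_socle_le_map_mulLeft h.smul_map_mulLeft_le
    h.length_map_mulLeft_eq_length_socle_add
  calc (e + 3 : ℕ∞) = 1 + (e + 2) := by rw [add_left_comm]; norm_num
    _ ≤ 1 + betti A 0 (Submodule.map (LinearMap.mulLeft A b) (maximalIdeal A)) := by gcongr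
    _ = betti A 1 (ResidueField A) := (h.isMinimalExactPair.betti_succ_residueField 0).symm

/-- Short exact sequences linking the ideals `(x * b)`, the annihilators of `x` in `(b)` and the
residue field bound the Betti numbers above by `bettiBounds`. The sequence `(s) → b𝔪 → k ^ (e + 2)`
bounds them below, by the recursion which `bettiBounds` satisfies. -/
theorem betti_residueField (h : IsExactGorenstein e s a b) (j : ℕ) :
    betti A j (ResidueField A) = (bettiBounds e j).2 := by
  refine le_antisymm (h.betti_le_bettiBounds j).2 ?_
  induction j using Nat.twoStepInduction with
  | zero => exact (betti_zero_residueField A).ge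
  | one =>
    rw [bettiBounds_one, Nat.cast_add]
    exact h.add_three_le_betti_one
  | more j _ ih =>
    have hupper := (h.betti_le_bettiBounds j).2
    have hlower := h.one_add_mul_betti_le j
    rw [← ENat.add_le_add_iff_right (ENat.natCast_ne_top (bettiBounds e j).2)]
    calc ((bettiBounds e (j + 2)).2 + (bettiBounds e j).2 : ℕ∞)
        = 1 + (e + 2) * (bettiBounds e (j + 1)).2 := mod_cast bettiBounds_add_two e j
      _ ≤ 1 + (e + 2) * betti A (j + 1) (ResidueField A) := by gcongr
      _ ≤ betti A (j + 2) (ResidueField A) + betti A j (ResidueField A) := hlower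
      _ ≤ betti A (j + 2) (ResidueField A) + (bettiBounds e j).2 := by gcongr

end Artinian

end IsExactGorenstein

end ExactGorenstein

section HomogeneousComponent

open MvPowerSeries

variable {σ R : Type*} [CommRing R] {d e : ℕ} {f : MvPowerSeries σ R}

lemma homogeneousComponent_self (d : ℕ) (f : MvPowerSeries σ R) :
    homogeneousComponent d (homogeneousComponent d f) = homogeneousComponent d f :=
  (isHomogeneous_iff_eq_homogeneousComponent.mp (isHomogeneous_homogeneousComponent f d)).symm

lemma le_order_homogeneousComponent (d : ℕ) (f : MvPowerSeries σ R) :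
    d ≤ (homogeneousComponent d f).order :=
  nat_le_order fun _ hα => by rw [coeff_homogeneousComponent, if_neg hα.ne]

lemma succ_le_order_sub_homogeneousComponent (hf : d ≤ f.order) :
    ((d + 1 : ℕ) : ℕ∞) ≤ (f - homogeneousComponent d f).order := by
  refine nat_le_order fun α hα => ?_
  rw [map_sub, coeff_homogeneousComponent]
  split_ifs with hd
  · exact sub_self _
  · have hlt : α.degree < d := lt_of_le_of_ne (Nat.lt_succ_iff.mp hα) hd
    rw [coeff_of_lt_order ((Nat.cast_lt.mpr hlt).trans_le hf), sub_zero]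

lemma le_order_sub_sum_homogeneousComponent (N : ℕ) (f : MvPowerSeries σ R) :
    N ≤ (f - ∑ d ∈ Finset.range N, homogeneousComponent d f).order := by
  refine nat_le_order fun α hα => ?_
  simp only [map_sub, map_sum, coeff_homogeneousComponent]
  rw [Finset.sum_ite_eq, if_pos (Finset.mem_range.mpr hα), sub_self]

lemma homogeneousComponent_add_mul_homogeneousComponent (d e : ℕ) (f g : MvPowerSeries σ R) :
    homogeneousComponent (d + e) (f * homogeneousComponent e g) =
      homogeneousComponent d f * homogeneousComponent e g := by
  classical
  ext α
  rw [coeff_homogeneousComponent]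
  simp only [coeff_mul, coeff_homogeneousComponent]
  split_ifs with hα
  · refine Finset.sum_congr rfl fun β hβ => ?_
    have hdeg : β.1.degree + β.2.degree = d + e := by
      rw [← map_add, Finset.HasAntidiagonal.mem_antidiagonal.mp hβ, hα]
    split_ifs <;> first | rfl | omega | rw [mul_zero, mul_zero]
  · refine (Finset.sum_eq_zero fun β hβ => ?_).symm
    have hdeg : β.1.degree + β.2.degree ≠ d + e := by
      rwa [← map_add, Finset.HasAntidiagonal.mem_antidiagonal.mp hβ]
    split_ifs <;> first | omega | simp only [zero_mul, mul_zero]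

lemma homogeneousComponent_mul_homogeneousComponent_of_lt (hde : d < e)
    (f g : MvPowerSeries σ R) : homogeneousComponent d (f * homogeneousComponent e g) = 0 := by
  refine homogeneousComponent_of_lt_order_eq_zero ((Nat.cast_lt.mpr hde).trans_le ?_)
  exact (le_order_homogeneousComponent e g).trans (le_add_self.trans le_order_mul)

lemma exists_forall_homogeneousComponent_eq (t : ℕ → MvPowerSeries σ R) :
    ∃ T, ∀ d, homogeneousComponent d T = homogeneousComponent d (t d) := by
  obtain ⟨T, hT⟩ : ∃ T : MvPowerSeries σ R, ∀ α, coeff α T = coeff α (t α.degree) :=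
    ⟨fun α => coeff α (t α.degree), fun _ => rfl⟩
  refine ⟨T, fun d => ?_⟩
  ext α
  simp only [coeff_homogeneousComponent, hT]
  split_ifs with hd
  · rw [hd]
  · rfl

/-- `f` is cut up according to the least variable occurring in each of its monomials. -/
lemma exists_eq_sum_X_mul {ι : Type*} [Fintype ι] [LinearOrder ι] {f : MvPowerSeries ι R}
    (hf : ((d + 1 : ℕ) : ℕ∞) ≤ f.order) :
    ∃ g : ι → MvPowerSeries ι R, (∀ i, d ≤ (g i).order) ∧ f = ∑ i, X i * g i := by
  obtain ⟨p, hp⟩ : ∃ p : ι → MvPowerSeries ι R, ∀ i α,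
      coeff α (p i) = if α.support.min = i then coeff α f else 0 :=
    ⟨fun i α => if α.support.min = i then coeff α f else 0, fun _ _ => rfl⟩
  have hdvd : ∀ i, X i ∣ p i := fun i => X_dvd_iff.mpr fun α hα => by
    rw [hp, if_neg fun hmin => Finsupp.mem_support_iff.mp (Finset.mem_of_min hmin) hα]
  choose g hg using hdvd
  refine ⟨g, fun i => nat_le_order fun β hβ => ?_, ?_⟩
  · have hcoeff : coeff β (g i) = coeff (Finsupp.single i 1 + β) (p i) := by
      rw [hg, X, coeff_add_monomial_mul, one_mul]
    have hlt : ((Finsupp.single i 1 + β).degree : ℕ∞) < f.order :=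
      (Nat.cast_lt.mpr (by rw [map_add, Finsupp.degree_single]; omega)).trans_le hf
    rw [hcoeff, hp, coeff_of_lt_order hlt, ite_self]
  · ext α
    simp only [map_sum, ← hg, hp]
    obtain rfl | hα := eq_or_ne α 0
    · have hlt : ((0 : ι →₀ ℕ).degree : ℕ∞) < f.order :=
        (Nat.cast_lt.mpr (by rw [map_zero]; omega)).trans_le hf
      simp only [coeff_of_lt_order hlt, ite_self, Finset.sum_const_zero]
    · obtain ⟨i, hi⟩ := Finset.min_of_nonempty (Finsupp.support_nonempty_iff.mpr hα)
      simp only [hi, WithTop.coe_inj, Finset.sum_ite_eq, Finset.mem_univ, if_true]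

end HomogeneousComponent

section InitialIdeal

open MvPowerSeries

variable {K : Type*} [Field K] {n d : ℕ}

lemma degM_eq_degree (α : Fin n →₀ ℕ) : degM α = α.degree :=
  α.degree_eq_sum.symm

lemma mxR_eq_maximalIdeal : mxR K n = IsLocalRing.maximalIdeal (MvPowerSeries (Fin n) K) := by
  ext f
  rw [mxR, RingHom.mem_ker, IsLocalRing.mem_maximalIdeal, mem_nonunits_iff,
    MvPowerSeries.isUnit_iff_constantCoeff, isUnit_iff_ne_zero, not_ne_iff]

lemma mem_mxR_iff_one_le_order {f : MvPowerSeries (Fin n) K} : f ∈ mxR K n ↔ 1 ≤ f.order := by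
  rw [mxR, RingHom.mem_ker, one_le_order_iff_constCoeff_eq_zero]

lemma X_mem_mxR (i : Fin n) : X i ∈ mxR K n := by
  rw [mxR, RingHom.mem_ker, constantCoeff_X]

lemma mem_mxR_pow_iff_le_order {f : MvPowerSeries (Fin n) K} :
    f ∈ mxR K n ^ d ↔ d ≤ f.order := by
  refine ⟨fun hf => ?_, fun hf => ?_⟩
  · induction d generalizing f with
    | zero => rw [Nat.cast_zero]; exact zero_le
    | succ d ih =>
      rw [pow_succ] at hf
      refine Submodule.mul_induction_on hf (fun g hg x hx => ?_) fun g g' hg hg' =>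
        (le_min hg hg').trans min_order_le_add
      rw [Nat.cast_succ]
      exact (add_le_add (ih hg) (mem_mxR_iff_one_le_order.mp hx)).trans le_order_mul
  · induction d generalizing f with
    | zero => rw [pow_zero, Ideal.one_eq_top]; exact Submodule.mem_top
    | succ d ih =>
      obtain ⟨g, hg, rfl⟩ := exists_eq_sum_X_mul hf
      rw [pow_succ']
      exact Ideal.sum_mem _ fun i _ => Ideal.mul_mem_mul (X_mem_mxR i) (ih (hg i))

lemma mxR_fg : (mxR K n).FG := by
  classical
  refine ⟨Finset.univ.image X, le_antisymm (Ideal.span_le.mpr ?_) fun f hf => ?_⟩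
  · intro g hg
    obtain ⟨i, -, rfl⟩ := Finset.mem_image.mp hg
    exact X_mem_mxR i
  · obtain ⟨g, -, rfl⟩ := exists_eq_sum_X_mul (d := 0) (mem_mxR_iff_one_le_order.mp hf)
    exact Ideal.sum_mem _ fun i _ => Ideal.mul_mem_right _ _
      (Ideal.subset_span (Finset.mem_image_of_mem X (Finset.mem_univ i)))

lemma homogeneousComponent_mem_pow (d : ℕ) (f : MvPowerSeries (Fin n) K) :
    homogeneousComponent d f ∈ mxR K n ^ d :=
  mem_mxR_pow_iff_le_order.mpr (le_order_homogeneousComponent d f)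

lemma sub_homogeneousComponent_mem_pow {f : MvPowerSeries (Fin n) K} (hf : f ∈ mxR K n ^ d) :
    f - homogeneousComponent d f ∈ mxR K n ^ (d + 1) :=
  mem_mxR_pow_iff_le_order.mpr
    (succ_le_order_sub_homogeneousComponent (mem_mxR_pow_iff_le_order.mp hf))

lemma homogeneousComponent_eq_zero_of_mem_pow {e : ℕ} (hde : d < e)
    {f : MvPowerSeries (Fin n) K} (hf : f ∈ mxR K n ^ e) : homogeneousComponent d f = 0 :=
  homogeneousComponent_of_lt_order_eq_zero
    ((Nat.cast_lt.mpr hde).trans_le (mem_mxR_pow_iff_le_order.mp hf))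

variable {I : Ideal (MvPowerSeries (Fin n) K)} {f : MvPowerSeries (Fin n) K}

lemma homogeneousComponent_mem_sup_iff (hf : f ∈ mxR K n ^ d) :
    homogeneousComponent d f ∈ I ⊔ mxR K n ^ (d + 1) ↔ f ∈ I ⊔ mxR K n ^ (d + 1) := by
  rw [← (I ⊔ mxR K n ^ (d + 1)).add_mem_iff_right
    (Ideal.mem_sup_right (sub_homogeneousComponent_mem_pow hf)), sub_add_cancel]

lemma mul_mem_sup_pow_add {e : ℕ} {g : MvPowerSeries (Fin n) K} (hf : f ∈ mxR K n ^ d)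
    (hg : g ∈ I ⊔ mxR K n ^ e) : f * g ∈ I ⊔ mxR K n ^ (d + e) := by
  obtain ⟨p, hp, q, hq, rfl⟩ := Submodule.mem_sup.mp hg
  rw [mul_add, pow_add]
  exact Submodule.add_mem_sup (I.mul_mem_left _ hp) (Ideal.mul_mem_mul hf hq)

lemma homogeneousComponent_mem_initialIdeal_of_mem (hf : f ∈ I) (hd : f ∈ mxR K n ^ d) :
    homogeneousComponent d f ∈ initialIdeal I := by
  refine Ideal.subset_span ⟨f, hf, d, fun α hα => coeff_of_lt_order ?_, fun α => ?_⟩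
  · rw [degM_eq_degree] at hα
    exact (Nat.cast_lt.mpr hα).trans_le (mem_mxR_pow_iff_le_order.mp hd)
  · rw [degM_eq_degree, coeff_homogeneousComponent]

lemma homogeneousComponent_mem_initialIdeal
    (hf : homogeneousComponent d f ∈ I ⊔ mxR K n ^ (d + 1)) :
    homogeneousComponent d f ∈ initialIdeal I := by
  obtain ⟨p, hp, q, hq, hpq⟩ := Submodule.mem_sup.mp hf
  have hpd : p ∈ mxR K n ^ d := by
    rw [eq_sub_of_add_eq hpq]
    exact Ideal.sub_mem _ (homogeneousComponent_mem_pow d f) (Ideal.pow_le_pow_right d.le_succ hq)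
  have hcomponent := congrArg (homogeneousComponent d) hpq
  rw [map_add, homogeneousComponent_eq_zero_of_mem_pow d.lt_succ_self hq, add_zero,
    homogeneousComponent_self] at hcomponent
  exact hcomponent ▸ homogeneousComponent_mem_initialIdeal_of_mem hp hpd

lemma homogeneousComponent_mem_of_mem_initialIdeal (hf : f ∈ initialIdeal I) (d : ℕ) :
    homogeneousComponent d f ∈ I ⊔ mxR K n ^ (d + 1) := by
  induction hf using Submodule.closure_induction with
  | zero => rw [map_zero]; exact Ideal.zero_mem _
  | add x y _ _ hx hy => rw [map_add]; exact Ideal.add_mem _ hx hy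
  | smul_mem r g hg =>
    obtain ⟨p, hp, e, horder, hcoeff⟩ := hg
    have hpe : p ∈ mxR K n ^ e := mem_mxR_pow_iff_le_order.mpr <| nat_le_order fun α hα =>
      horder α (by rwa [degM_eq_degree])
    obtain rfl : g = homogeneousComponent e p := by
      ext α
      rw [hcoeff, coeff_homogeneousComponent, degM_eq_degree]
    rw [smul_eq_mul]
    obtain hde | hed := lt_or_ge d e
    · rw [homogeneousComponent_mul_homogeneousComponent_of_lt hde]
      exact Ideal.zero_mem _
    · obtain ⟨k, rfl⟩ := Nat.exists_eq_add_of_le' hed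
      rw [homogeneousComponent_add_mul_homogeneousComponent, add_assoc]
      exact mul_mem_sup_pow_add (homogeneousComponent_mem_pow k r)
        ((homogeneousComponent_mem_sup_iff hpe).mpr (Ideal.mem_sup_left hp))

lemma pow_le_initialIdeal {N : ℕ} (hN : mxR K n ^ N ≤ I) : mxR K n ^ N ≤ initialIdeal I := by
  refine Submodule.le_of_le_smul_of_le_jacobson_bot (I := mxR K n) mxR_fg.pow ?_ fun f hf => ?_
  · rw [mxR_eq_maximalIdeal]
    exact IsLocalRing.maximalIdeal_le_jacobson ⊥
  · rw [← sub_add_cancel f (homogeneousComponent N f), add_comm, smul_eq_mul, ← pow_succ']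
    exact Submodule.add_mem_sup
      (homogeneousComponent_mem_initialIdeal
        (Ideal.mem_sup_left (hN (homogeneousComponent_mem_pow N f))))
      (sub_homogeneousComponent_mem_pow hf)

lemma mem_initialIdeal_iff {N : ℕ} (hN : mxR K n ^ N ≤ I) :
    f ∈ initialIdeal I ↔ ∀ d, homogeneousComponent d f ∈ I ⊔ mxR K n ^ (d + 1) := by
  refine ⟨homogeneousComponent_mem_of_mem_initialIdeal, fun hf => ?_⟩
  rw [← sub_add_cancel f (∑ d ∈ Finset.range N, homogeneousComponent d f)]
  exact Ideal.add_mem _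
    (pow_le_initialIdeal hN
      (mem_mxR_pow_iff_le_order.mpr (le_order_sub_sum_homogeneousComponent N f)))
    (Ideal.sum_mem _ fun d _ => homogeneousComponent_mem_initialIdeal (hf d))

lemma initialIdeal_le_mxR (hI : I ≤ mxR K n) : initialIdeal I ≤ mxR K n := by
  intro f hf
  have hcomponent := homogeneousComponent_mem_of_mem_initialIdeal hf 0
  have hsub := sub_homogeneousComponent_mem_pow (d := 0) (f := f)
    (by rw [pow_zero, Ideal.one_eq_top]; exact Submodule.mem_top)
  rw [zero_add, pow_one] at hcomponent hsub
  rw [← sub_add_cancel f (homogeneousComponent 0 f)]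
  exact Ideal.add_mem _ hsub (sup_le hI le_rfl hcomponent)

lemma initialIdeal_sup_sq (hI : I ≤ mxR K n) :
    initialIdeal I ⊔ mxR K n ^ 2 = I ⊔ mxR K n ^ 2 := by
  refine le_antisymm (sup_le (fun f hf => ?_) le_sup_right) (sup_le (fun f hf => ?_) le_sup_right)
  · exact (homogeneousComponent_mem_sup_iff (d := 1)
      (by rw [pow_one]; exact initialIdeal_le_mxR hI hf)).mp
      (homogeneousComponent_mem_of_mem_initialIdeal hf 1)
  · have hf1 : f ∈ mxR K n ^ 1 := by rw [pow_one]; exact hI hf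
    exact (homogeneousComponent_mem_sup_iff hf1).mp
      (Ideal.mem_sup_left (homogeneousComponent_mem_initialIdeal_of_mem hf hf1))

end InitialIdeal

section LocalAlgebra

open CategoryTheory IsLocalRing

universe u

lemma length_tor_eq_betti_residueField {A k : Type u} [CommRing A] [IsLocalRing A] [CommRing k]
    [Algebra A k] (hsurj : Function.Surjective (algebraMap A k))
    (hker : RingHom.ker (algebraMap A k) = maximalIdeal A) (j : ℕ) :
    Module.length A (((Tor (ModuleCat A) j).obj (ModuleCat.of A k)).obj (ModuleCat.of A k)) =
      betti A j (ResidueField A) := by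
  let κ := ModuleCat.of A (ResidueField A)
  let e : ModuleCat.of A k ≅ κ :=
    ((Ideal.quotientEquivAlgOfEq A hker).symm.trans
      (Ideal.quotientKerAlgEquivOfSurjective (f := Algebra.ofId A k) hsurj)).symm.toLinearEquiv
        |>.toModuleIso
  exact (((Tor _ j).mapIso e).app _ ≪≫ ((Tor _ j).obj κ).mapIso e ≪≫
    torIsoTorFunctor κ j κ).toLinearEquiv.length_eq

lemma isArtinianRing_of_maximalIdeal_pow_eq_bot {A : Type*} [CommRing A] [IsLocalRing A] {N : ℕ}
    (hfg : (maximalIdeal A).FG) (hN : maximalIdeal A ^ N = ⊥) : IsArtinianRing A := by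
  have hnoeth : IsNoetherianRing A := .of_prime fun P hP => by
    have hle : maximalIdeal A ≤ P := hP.le_of_pow_le (n := N) (hN.trans_le bot_le)
    rwa [← (maximalIdeal.isMaximal A).eq_of_le hP.ne_top hle]
  exact (isArtinianRing_iff_isNilpotent_maximalIdeal A).mpr ⟨N, hN⟩

variable {K A X : Type*} [Field K] [CommRing A] [IsLocalRing A] [Algebra K A] [AddCommGroup X]
  [Module A X] [Module K X] [IsScalarTower K A X]

lemma length_eq_length_of_surjective_residueField
    (hκ : Function.Surjective (algebraMap K (ResidueField A))) :
    Module.length K X = Module.length A X := by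
  have hdegree : Module.length (ResidueField K) (ResidueField A) = 1 := by
    have hK : Module.length K (ResidueField A) = 1 :=
      (Module.length_eq_of_surjective hκ).trans (Module.length_eq_one _ _)
    rwa [length_restrictScalars K A, length_residueField, one_mul] at hK
  rw [length_restrictScalars K A, hdegree, mul_one]

lemma finrank_restrictScalars_eq_toNat_length
    (hκ : Function.Surjective (algebraMap K (ResidueField A))) (X : Type*) [AddCommGroup X]
    [Module A X] : Module.finrank K (RestrictScalars K A X) = (Module.length A X).toNat := by
  let _ : Module K X := Module.restrictScalars K A X
  have : IsScalarTower K A X := IsScalarTower.restrictScalars K A X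
  rw [← length_eq_length_of_surjective_residueField (K := K) hκ, Module.length_eq_rank,
    Cardinal.toNat_toENat]
  rfl

end LocalAlgebra

section QuotientByIdeal

open CategoryTheory IsLocalRing

universe u

variable {K : Type u} [Field K] {n : ℕ} {I : Ideal (MvPowerSeries (Fin n) K)}

instance [Nontrivial (MvPowerSeries (Fin n) K ⧸ I)] :
    IsLocalRing (MvPowerSeries (Fin n) K ⧸ I) :=
  .of_surjective' (Ideal.Quotient.mk I) Ideal.Quotient.mk_surjective

variable [IsLocalRing (MvPowerSeries (Fin n) K ⧸ I)]

lemma map_mxR_eq_maximalIdeal :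
    (mxR K n).map (Ideal.Quotient.mk I) = maximalIdeal (MvPowerSeries (Fin n) K ⧸ I) := by
  rw [mxR_eq_maximalIdeal]
  exact map_maximalIdeal_of_surjective _ Ideal.Quotient.mk_surjective

lemma map_mxR_pow_eq_maximalIdeal_pow (k : ℕ) : (mxR K n ^ k).map (Ideal.Quotient.mk I) =
    maximalIdeal (MvPowerSeries (Fin n) K ⧸ I) ^ k := by
  rw [Ideal.map_pow, map_mxR_eq_maximalIdeal]

lemma mk_mem_maximalIdeal_pow_iff {k : ℕ} {f : MvPowerSeries (Fin n) K} :
    Ideal.Quotient.mk I f ∈ maximalIdeal (MvPowerSeries (Fin n) K ⧸ I) ^ k ↔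
      f ∈ I ⊔ mxR K n ^ k := by
  rw [← map_mxR_pow_eq_maximalIdeal_pow, Ideal.mem_quotient_iff_mem_sup, sup_comm]

variable (I) in
lemma le_mxR_of_isLocalRing : I ≤ mxR K n := by
  rw [mxR_eq_maximalIdeal]
  exact le_maximalIdeal (Ideal.Quotient.nontrivial_iff.mp inferInstance)

lemma maximalIdeal_pow_eq_bot {N : ℕ} (hN : mxR K n ^ N ≤ I) :
    maximalIdeal (MvPowerSeries (Fin n) K ⧸ I) ^ N = ⊥ := by
  rw [← map_mxR_pow_eq_maximalIdeal_pow, Ideal.map_eq_bot_iff_le_ker, Ideal.mk_ker]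
  exact hN

lemma isArtinianRing_quotient {N : ℕ} (hN : mxR K n ^ N ≤ I) :
    IsArtinianRing (MvPowerSeries (Fin n) K ⧸ I) :=
  isArtinianRing_of_maximalIdeal_pow_eq_bot (map_mxR_eq_maximalIdeal (I := I) ▸ mxR_fg.map _)
    (maximalIdeal_pow_eq_bot hN)

variable (I) in
lemma algebraMap_residueField_surjective :
    Function.Surjective (algebraMap K (ResidueField (MvPowerSeries (Fin n) K ⧸ I))) := by
  intro x
  obtain ⟨y, rfl⟩ := residue_surjective x
  obtain ⟨f, rfl⟩ := Ideal.Quotient.mk_surjective y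
  refine ⟨MvPowerSeries.constantCoeff f, ?_⟩
  change residue _ (Ideal.Quotient.mk I (MvPowerSeries.C (MvPowerSeries.constantCoeff f))) = _
  rw [← sub_eq_zero, ← map_sub, ← map_sub, residue_eq_zero_iff, ← map_mxR_eq_maximalIdeal]
  refine Ideal.mem_map_of_mem _ ?_
  rw [mxR, RingHom.mem_ker, map_sub, MvPowerSeries.constantCoeff_C, sub_self]

lemma length_quotient_sup_pow (k : ℕ) :
    Module.length K (MvPowerSeries (Fin n) K ⧸ I ⊔ mxR K n ^ k) =
      Module.length (MvPowerSeries (Fin n) K ⧸ I)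
        ((MvPowerSeries (Fin n) K ⧸ I) ⧸ maximalIdeal (MvPowerSeries (Fin n) K ⧸ I) ^ k) := by
  rw [← length_eq_length_of_surjective_residueField (algebraMap_residueField_surjective I),
    ← map_mxR_pow_eq_maximalIdeal_pow]
  exact (DoubleQuot.quotQuotEquivQuotSupₐ K I (mxR K n ^ k)).toLinearEquiv.symm.length_eq

variable (I) in
lemma finrank_quotient_sup_mxR :
    Module.finrank K (MvPowerSeries (Fin n) K ⧸ I ⊔ mxR K n ^ 1) = 1 := by
  have hlength : Module.length K (MvPowerSeries (Fin n) K ⧸ I ⊔ mxR K n ^ 1) = 1 := by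
    rw [length_quotient_sup_pow, pow_one]
    exact length_residueField _
  rw [← Module.rank_eq_one_iff_finrank_eq_one, ← Cardinal.toENat_eq_one, ← Module.length_eq_rank,
    hlength]

lemma length_quotient_maximalIdeal_sq {e : ℕ} (he : hilbQ I 1 = e + 3) :
    Module.length (MvPowerSeries (Fin n) K ⧸ I) ((MvPowerSeries (Fin n) K ⧸ I) ⧸
      maximalIdeal (MvPowerSeries (Fin n) K ⧸ I) ^ 2) = e + 4 := by
  have hfinrank : Module.finrank K (MvPowerSeries (Fin n) K ⧸ I ⊔ mxR K n ^ 2) = e + 4 := by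
    have := finrank_quotient_sup_mxR I
    rw [hilbQ, one_add_one_eq_two] at he
    lia
  have : Module.Finite K (MvPowerSeries (Fin n) K ⧸ I ⊔ mxR K n ^ 2) :=
    Module.finite_of_finrank_pos (by lia)
  rw [← length_quotient_sup_pow, Module.length_eq_finrank, hfinrank, Nat.cast_add, Nat.cast_ofNat]

lemma bettiQ_eq_toNat_betti (j : ℕ) :
    bettiQ I j = (betti (MvPowerSeries (Fin n) K ⧸ I) j
      (ResidueField (MvPowerSeries (Fin n) K ⧸ I))).toNat := by
  let _ : Algebra (MvPowerSeries (Fin n) K ⧸ I) (MvPowerSeries (Fin n) K ⧸ (I ⊔ mxR K n)) :=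
    (Ideal.Quotient.factor (S := I) (T := I ⊔ mxR K n) le_sup_left).toAlgebra
  have hker : RingHom.ker (algebraMap (MvPowerSeries (Fin n) K ⧸ I)
      (MvPowerSeries (Fin n) K ⧸ (I ⊔ mxR K n))) = maximalIdeal _ := by
    rw [← map_mxR_eq_maximalIdeal]
    refine (Ideal.Quotient.factor_ker le_sup_left).trans ?_
    rw [Ideal.map_sup, Ideal.map_quotient_self, bot_sup_eq]
  rw [← length_tor_eq_betti_residueField (Ideal.Quotient.factor_surjective le_sup_left) hker,
    ← finrank_restrictScalars_eq_toNat_length (algebraMap_residueField_surjective I)]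
  rfl

end QuotientByIdeal

section Transfer

open IsLocalRing MvPowerSeries
open Ideal.Quotient (mk mk_surjective eq_zero_iff_mem)

universe u

lemma IsExactGorenstein.exists_mem_pow_sub_mul_mem {A : Type*} [CommRing A] [IsLocalRing A]
    [IsArtinianRing A] {e : ℕ} {s a b : A} (h : IsExactGorenstein e s a b) {i : ℕ} {x : A}
    (hx : x ∈ maximalIdeal A ^ (i + 1)) (hax : a * x ∈ maximalIdeal A ^ (i + 3)) :
    ∃ t ∈ maximalIdeal A ^ i, x - t * b ∈ maximalIdeal A ^ (i + 2) := by
  obtain ⟨y, hy, hay⟩ := h.exists_mem_pow_mul_eq (i + 2) hax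
  obtain ⟨t, ht⟩ := Ideal.mem_span_singleton'.mp <|
    (h.mul_left_eq_zero_iff (x - y)).mp (by rw [mul_sub, hay, sub_self])
  have hbt : b * t ∈ maximalIdeal A ^ (i + 1) := by
    rw [mul_comm, ht]
    exact sub_mem hx (Ideal.pow_le_pow_right (Nat.le_succ _) hy)
  obtain ⟨t', ht', hbt'⟩ := h.symm.exists_mem_pow_mul_eq i hbt
  refine ⟨t', ht', ?_⟩
  rwa [mul_comm, hbt', mul_comm, ht, sub_sub_cancel]

variable {K : Type u} [Field K] {n d : ℕ} {I : Ideal (MvPowerSeries (Fin n) K)}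
  [IsLocalRing (MvPowerSeries (Fin n) K ⧸ I)] {f y : MvPowerSeries (Fin n) K}

lemma mk_mem_pow (hf : f ∈ mxR K n ^ d) :
    mk I f ∈ maximalIdeal (MvPowerSeries (Fin n) K ⧸ I) ^ d :=
  mk_mem_maximalIdeal_pow_iff.mpr (Ideal.mem_sup_right hf)

lemma mem_mxR_of_mk_mem (hf : mk I f ∈ maximalIdeal (MvPowerSeries (Fin n) K ⧸ I)) :
    f ∈ mxR K n := by
  rwa [← pow_one (maximalIdeal _), mk_mem_maximalIdeal_pow_iff, pow_one,
    sup_eq_right.mpr (le_mxR_of_isLocalRing I)] at hf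

lemma exists_mem_pow_mk_eq {x : MvPowerSeries (Fin n) K ⧸ I} (hx : x ∈ maximalIdeal _ ^ d) :
    ∃ f ∈ mxR K n ^ d, mk I f = x := by
  rwa [← map_mxR_pow_eq_maximalIdeal_pow, Ideal.mem_map_iff_of_surjective _ mk_surjective] at hx

lemma mk_homogeneousComponent_mem_iff (hf : f ∈ mxR K n ^ d) :
    mk I (homogeneousComponent d f) ∈ maximalIdeal (MvPowerSeries (Fin n) K ⧸ I) ^ (d + 1) ↔
      mk I f ∈ maximalIdeal (MvPowerSeries (Fin n) K ⧸ I) ^ (d + 1) := by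
  rw [mk_mem_maximalIdeal_pow_iff, mk_mem_maximalIdeal_pow_iff, homogeneousComponent_mem_sup_iff hf]

lemma mem_initialIdeal_iff_mk_mem {N : ℕ} (hN : mxR K n ^ N ≤ I) :
    f ∈ initialIdeal I ↔ ∀ d,
      mk I (homogeneousComponent d f) ∈ maximalIdeal (MvPowerSeries (Fin n) K ⧸ I) ^ (d + 1) := by
  simp only [mem_initialIdeal_iff hN, mk_mem_maximalIdeal_pow_iff]

lemma homogeneousComponent_succ_mul (hf : f ∈ mxR K n ^ d) (hy : y ∈ mxR K n) :
    homogeneousComponent (d + 1) (f * y) = homogeneousComponent d f * homogeneousComponent 1 y :=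
  homogeneousComponent_mul_of_le_order (mem_mxR_pow_iff_le_order.mp hf)
    (mod_cast mem_mxR_iff_one_le_order.mp hy)

lemma mk_homogeneousComponent_mul_mem (hy : y ∈ mxR K n)
    (hfy : f * homogeneousComponent 1 y ∈ initialIdeal I) (d : ℕ) :
    mk I (homogeneousComponent d f) * mk I y ∈
      maximalIdeal (MvPowerSeries (Fin n) K ⧸ I) ^ (d + 2) := by
  have hf := homogeneousComponent_mem_pow d f
  rw [← map_mul, ← mk_homogeneousComponent_mem_iff (pow_succ (mxR K n) d ▸ Ideal.mul_mem_mul hf hy),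
    homogeneousComponent_succ_mul hf hy, homogeneousComponent_self,
    ← homogeneousComponent_add_mul_homogeneousComponent, mk_mem_maximalIdeal_pow_iff]
  exact homogeneousComponent_mem_of_mem_initialIdeal hfy (d + 1)

variable {e : ℕ} {q α β : MvPowerSeries (Fin n) K}

lemma mxR_pow_four_le (h : IsExactGorenstein e (mk I q) (mk I α) (mk I β)) : mxR K n ^ 4 ≤ I := by
  rw [← Ideal.mk_ker (I := I), ← Ideal.map_eq_bot_iff_le_ker, map_mxR_pow_eq_maximalIdeal_pow,
    h.maximalIdeal_pow_four]

lemma mk_eq_zero_of_mem_pow (h : IsExactGorenstein e (mk I q) (mk I α) (mk I β)) (hd : 4 ≤ d)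
    (hf : f ∈ mxR K n ^ d) : mk I f = 0 :=
  eq_zero_iff_mem.mpr (mxR_pow_four_le h (Ideal.pow_le_pow_right hd hf))

lemma mk_homogeneousComponent_three (h : IsExactGorenstein e (mk I q) (mk I α) (mk I β))
    (hq : q ∈ mxR K n ^ 3) : mk I (homogeneousComponent 3 q) = mk I q := by
  rw [eq_comm, ← sub_eq_zero, ← map_sub]
  exact mk_eq_zero_of_mem_pow h le_rfl (sub_homogeneousComponent_mem_pow hq)

lemma homogeneousComponent_mul_mem_initialIdeal
    (h : IsExactGorenstein e (mk I q) (mk I α) (mk I β)) :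
    homogeneousComponent 1 α * homogeneousComponent 1 β ∈ initialIdeal I := by
  have hα := mem_mxR_of_mk_mem h.left_mem
  have hβ := mem_mxR_of_mk_mem h.right_mem
  rw [← homogeneousComponent_succ_mul (by rwa [pow_one]) hβ]
  refine homogeneousComponent_mem_initialIdeal_of_mem ?_
    (pow_two (mxR K n) ▸ Ideal.mul_mem_mul hα hβ)
  rw [← eq_zero_iff_mem, map_mul, h.mul_left_eq_zero_iff]
  exact Ideal.mem_span_singleton_self _

variable [IsArtinianRing (MvPowerSeries (Fin n) K ⧸ I)]

lemma exists_sub_mul_mem_initialIdeal_of_forall_mul_mem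
    (h : IsExactGorenstein e (mk I q) (mk I α) (mk I β)) (hq : q ∈ mxR K n ^ 3)
    (hf : ∀ y ∈ mxR K n, f * y ∈ initialIdeal I) :
    ∃ c, f - c * homogeneousComponent 3 q ∈ initialIdeal I := by
  have hmul : ∀ d, ∀ y ∈ maximalIdeal (MvPowerSeries (Fin n) K ⧸ I),
      mk I (homogeneousComponent d f) * y ∈ maximalIdeal _ ^ (d + 2) := by
    intro d y hy
    obtain ⟨y, rfl⟩ := mk_surjective y
    exact mk_homogeneousComponent_mul_mem (mem_mxR_of_mk_mem hy)
      (hf _ (pow_one (mxR K n) ▸ homogeneousComponent_mem_pow 1 y)) d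
  have hthree := mk_mem_pow (I := I) (homogeneousComponent_mem_pow 3 f)
  rw [h.maximalIdeal_pow_three] at hthree
  obtain ⟨c, hc⟩ := Ideal.mem_span_singleton'.mp hthree
  obtain ⟨c, rfl⟩ := mk_surjective c
  refine ⟨c, (mem_initialIdeal_iff_mk_mem (mxR_pow_four_le h)).mpr fun d => ?_⟩
  obtain hd | rfl | hd := lt_trichotomy d 3
  · rw [map_sub, homogeneousComponent_mul_homogeneousComponent_of_lt hd, sub_zero]
    exact h.mem_pow_succ_of_forall_mul_mem (Nat.le_of_lt_succ hd) (hmul d)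
  · rw [map_sub, ← homogeneousComponent_self 3 f, ← map_sub, mk_homogeneousComponent_mem_iff
      (sub_mem (homogeneousComponent_mem_pow 3 f)
        (Ideal.mul_mem_left _ c (homogeneousComponent_mem_pow 3 q))), map_sub, map_mul,
      mk_homogeneousComponent_three h hq, hc, sub_self]
    exact zero_mem _
  · rw [mk_eq_zero_of_mem_pow h hd (homogeneousComponent_mem_pow d _)]
    exact zero_mem _

lemma exists_sub_mul_mem_initialIdeal_of_mul_mem
    (h : IsExactGorenstein e (mk I q) (mk I α) (mk I β))
    (hf : f * homogeneousComponent 1 α ∈ initialIdeal I) :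
    ∃ c, f - c * homogeneousComponent 1 β ∈ initialIdeal I := by
  have hα := mem_mxR_of_mk_mem h.left_mem
  have hβ := mem_mxR_of_mk_mem h.right_mem
  have hmul := mk_homogeneousComponent_mul_mem hα hf
  have hτ : ∀ d, ∃ τ ∈ mxR K n ^ d, mk I (homogeneousComponent (d + 1) f - τ * β) ∈
      maximalIdeal (MvPowerSeries (Fin n) K ⧸ I) ^ (d + 2) := by
    intro d
    obtain ⟨t, ht, hmem⟩ := h.exists_mem_pow_sub_mul_mem
      (mk_mem_pow (homogeneousComponent_mem_pow (d + 1) f)) (mul_comm (mk I α) _ ▸ hmul (d + 1))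
    obtain ⟨τ, hτ, rfl⟩ := exists_mem_pow_mk_eq ht
    exact ⟨τ, hτ, by rwa [map_sub, map_mul]⟩
  choose τ hτ hτβ using hτ
  obtain ⟨T, hT⟩ := exists_forall_homogeneousComponent_eq τ
  refine ⟨T, (mem_initialIdeal_iff_mk_mem (mxR_pow_four_le h)).mpr fun d => ?_⟩
  match d with
  | 0 =>
    rw [map_sub, homogeneousComponent_mul_homogeneousComponent_of_lt one_pos, sub_zero, zero_add,
      pow_one]
    by_contra hunit
    exact h.left_notMem_sq
      ((Ideal.unit_mul_mem_iff_mem _ (notMem_maximalIdeal.mp hunit)).mp (hmul 0))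
  | d + 1 =>
    rw [map_sub, homogeneousComponent_add_mul_homogeneousComponent, hT,
      ← homogeneousComponent_succ_mul (hτ d) hβ, ← homogeneousComponent_self (d + 1) f, ← map_sub,
      mk_homogeneousComponent_mem_iff (sub_mem (homogeneousComponent_mem_pow (d + 1) f)
        (pow_succ (mxR K n) d ▸ Ideal.mul_mem_mul (hτ d) hβ))]
    exact hτβ d

lemma initialForm_left_mul_eq_zero_iff (h : IsExactGorenstein e (mk I q) (mk I α) (mk I β))
    {x : MvPowerSeries (Fin n) K ⧸ initialIdeal I} :
    mk (initialIdeal I) (homogeneousComponent 1 α) * x = 0 ↔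
      x ∈ Ideal.span {mk (initialIdeal I) (homogeneousComponent 1 β)} := by
  obtain ⟨f, rfl⟩ := mk_surjective x
  rw [Ideal.mem_span_singleton']
  refine ⟨fun hf => ?_, ?_⟩
  · rw [mul_comm, ← map_mul, eq_zero_iff_mem] at hf
    obtain ⟨c, hc⟩ := exists_sub_mul_mem_initialIdeal_of_mul_mem h hf
    exact ⟨mk _ c, by rw [← map_mul]; exact (Ideal.Quotient.eq.mpr hc).symm⟩
  · rintro ⟨c, hc⟩
    rw [← hc, mul_left_comm, ← map_mul,
      eq_zero_iff_mem.mpr (homogeneousComponent_mul_mem_initialIdeal h), mul_zero]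

lemma mem_span_initialForm_socle_iff [IsLocalRing (MvPowerSeries (Fin n) K ⧸ initialIdeal I)]
    (h : IsExactGorenstein e (mk I q) (mk I α) (mk I β)) (hq : q ∈ mxR K n ^ 3)
    {x : MvPowerSeries (Fin n) K ⧸ initialIdeal I} :
    x ∈ Ideal.span {mk (initialIdeal I) (homogeneousComponent 3 q)} ↔
      ∀ y ∈ maximalIdeal (MvPowerSeries (Fin n) K ⧸ initialIdeal I), y * x = 0 := by
  obtain ⟨f, rfl⟩ := mk_surjective x
  refine ⟨fun hf x hx => ?_, fun hf => ?_⟩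
  · obtain ⟨c, hc⟩ := Ideal.mem_span_singleton'.mp hf
    have hzero := Ideal.mul_mem_mul hx (mk_mem_pow (homogeneousComponent_mem_pow 3 q))
    rw [← pow_succ', maximalIdeal_pow_eq_bot (pow_le_initialIdeal (mxR_pow_four_le h)),
      Ideal.mem_bot] at hzero
    rw [← hc, mul_left_comm, hzero, mul_zero]
  · obtain ⟨c, hc⟩ := exists_sub_mul_mem_initialIdeal_of_forall_mul_mem h hq fun y hy => by
      rw [← eq_zero_iff_mem, mul_comm, map_mul]
      exact hf _ (map_mxR_eq_maximalIdeal (I := initialIdeal I) ▸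
        Ideal.mem_map_of_mem _ hy)
    rw [Ideal.mem_span_singleton']
    exact ⟨mk _ c, by rw [← map_mul]; exact (Ideal.Quotient.eq.mpr hc).symm⟩

theorem isExactGorenstein_initialIdeal [IsLocalRing (MvPowerSeries (Fin n) K ⧸ initialIdeal I)]
    (h : IsExactGorenstein e (mk I q) (mk I α) (mk I β)) (hq : q ∈ mxR K n ^ 3) :
    IsExactGorenstein e (mk (initialIdeal I) (homogeneousComponent 3 q))
      (mk (initialIdeal I) (homogeneousComponent 1 α))
      (mk (initialIdeal I) (homogeneousComponent 1 β)) where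
  maximalIdeal_pow_four := maximalIdeal_pow_eq_bot (pow_le_initialIdeal (mxR_pow_four_le h))
  mem_span_socle_iff _ := mem_span_initialForm_socle_iff h hq
  socle_ne_zero hzero := by
    have hmem := homogeneousComponent_mem_of_mem_initialIdeal (eq_zero_iff_mem.mp hzero) 3
    rw [homogeneousComponent_self, ← mk_mem_maximalIdeal_pow_iff, h.maximalIdeal_pow_four,
      Ideal.mem_bot, mk_homogeneousComponent_three h hq] at hmem
    exact h.socle_ne_zero hmem
  length_quot_sq := by
    rw [← length_quotient_sup_pow, initialIdeal_sup_sq (le_mxR_of_isLocalRing I),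
      length_quotient_sup_pow, h.length_quot_sq]
  left_ne_zero hzero := by
    have hmem := homogeneousComponent_mem_of_mem_initialIdeal (eq_zero_iff_mem.mp hzero) 1
    rw [homogeneousComponent_self, ← mk_mem_maximalIdeal_pow_iff, mk_homogeneousComponent_mem_iff
      (by rw [pow_one]; exact mem_mxR_of_mk_mem h.left_mem)] at hmem
    exact h.left_notMem_sq hmem
  left_mem := by
    rw [← map_mxR_eq_maximalIdeal]
    exact Ideal.mem_map_of_mem _ (pow_one (mxR K n) ▸ homogeneousComponent_mem_pow 1 α)
  mul_left_eq_zero_iff _ := initialForm_left_mul_eq_zero_iff h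

end Transfer

section RationalSeries

open Polynomial

lemma isRationalSeries_of_recurrence {c : ℕ → ℚ} {u v : ℚ}
    (hc : ∀ j, c (j + 2) + c j = u + v * c (j + 1)) : isRationalSeries (PowerSeries.mk c) := by
  let q : ℚ[X] := 1 - C (v + 1) * X + C (v + 1) * X ^ 2 - X ^ 3
  let p : ℚ[X] := C (c 0) + X * (C (c 1 - (v + 1) * c 0) + X * C (u - c 1 + v * c 0))
  have hq : q ≠ 0 := fun h => by simpa [q] using congrArg (eval 0) h
  have hmul (P : PowerSeries ℚ) : (q : PowerSeries ℚ) * P = P - .C (v + 1) * (.X * P) +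
      .C (v + 1) * (.X * (.X * P)) - .X * (.X * (.X * P)) := by
    simp only [q]
    push_cast
    ring
  refine ⟨p, q, hq, ?_⟩
  rw [hmul]
  ext j
  simp only [p, coe_add, coe_mul, coe_C, coe_X]
  rcases j with _ | _ | _ | j <;>
  simp only [map_add (PowerSeries.coeff _), map_sub (PowerSeries.coeff _), PowerSeries.coeff_C_mul,
    PowerSeries.coeff_zero_X_mul, PowerSeries.coeff_succ_X_mul, PowerSeries.coeff_mk,
    PowerSeries.coeff_zero_C, PowerSeries.coeff_succ_C, zero_add]
  · ring
  · ring
  · linarith [hc 0]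
  · linarith [hc j, hc (j + 1)]

lemma isRationalSeries_bettiBounds (e : ℕ) :
    isRationalSeries (PowerSeries.mk fun j => ((bettiBounds e j).2 : ℚ)) :=
  isRationalSeries_of_recurrence (u := 1) (v := e + 2) fun j => mod_cast bettiBounds_add_two e j

end RationalSeries

section PoincareSeries

open IsLocalRing
open Ideal.Quotient (mk mk_surjective)

variable {K : Type*} [Field K] {n : ℕ} {I : Ideal (MvPowerSeries (Fin n) K)}

lemma mem_colon_bot_map_mxR_iff [IsLocalRing (MvPowerSeries (Fin n) K ⧸ I)]
    {x : MvPowerSeries (Fin n) K ⧸ I} :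
    x ∈ Submodule.colon (⊥ : Ideal (MvPowerSeries (Fin n) K ⧸ I)) ((mxR K n).map (mk I)) ↔
      ∀ y ∈ maximalIdeal (MvPowerSeries (Fin n) K ⧸ I), y * x = 0 := by
  simp only [Submodule.mem_colon, map_mxR_eq_maximalIdeal, smul_eq_mul, Submodule.mem_bot, mul_comm,
    SetLike.mem_coe]

lemma exists_mem_span_iff_of_socDimQ_eq_one [IsLocalRing (MvPowerSeries (Fin n) K ⧸ I)]
    (hGor : socDimQ I = 1) : ∃ s : MvPowerSeries (Fin n) K ⧸ I, s ≠ 0 ∧ ∀ x,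
      x ∈ Ideal.span {s} ↔ ∀ y ∈ maximalIdeal (MvPowerSeries (Fin n) K ⧸ I), y * x = 0 := by
  obtain ⟨⟨s, hs⟩, hs0, hspan⟩ := finrank_eq_one_iff'.mp hGor
  refine ⟨s, fun h => hs0 (Subtype.ext h), fun x => ?_⟩
  rw [← mem_colon_bot_map_mxR_iff]
  refine ⟨fun hx => (Ideal.span_singleton_le_iff_mem _).mpr hs hx, fun hx => ?_⟩
  obtain ⟨c, hc⟩ := hspan ⟨x, hx⟩
  obtain rfl : c • s = x := congrArg Subtype.val hc
  exact Submodule.smul_of_tower_mem _ c (Ideal.mem_span_singleton_self s)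

lemma mem_colon_bot_span_singleton_iff {A : Type*} [CommRing A] {a x : A} :
    x ∈ Submodule.colon (⊥ : Ideal A) (Ideal.span {a}) ↔ a * x = 0 := by
  rw [Ideal.span, Submodule.colon_span, Submodule.mem_colon_singleton, Submodule.mem_bot,
    smul_eq_mul, mul_comm]

lemma exists_isExactGorenstein (hm4 : mxR K n ^ 4 ≤ I) (hGor : socDimQ I = 1)
    (h1 : 3 ≤ hilbQ I 1) [IsLocalRing (MvPowerSeries (Fin n) K ⧸ I)]
    {a b : MvPowerSeries (Fin n) K ⧸ I} (ha0 : a ≠ 0) (ham : a ∈ maximalIdeal _)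
    (hab : Submodule.colon (⊥ : Ideal (MvPowerSeries (Fin n) K ⧸ I)) (Ideal.span {a}) =
      Ideal.span {b}) : ∃ e s, IsExactGorenstein e s a b := by
  obtain ⟨s, hs0, hs⟩ := exists_mem_span_iff_of_socDimQ_eq_one hGor
  exact ⟨hilbQ I 1 - 3, s, {
    maximalIdeal_pow_four := maximalIdeal_pow_eq_bot hm4
    mem_span_socle_iff := hs
    socle_ne_zero := hs0
    length_quot_sq := length_quotient_maximalIdeal_sq (Nat.sub_add_cancel h1).symm
    left_ne_zero := ha0
    left_mem := ham
    mul_left_eq_zero_iff := fun x => by rw [← hab, mem_colon_bot_span_singleton_iff] }⟩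

lemma bettiQ_eq_bettiBounds [IsLocalRing (MvPowerSeries (Fin n) K ⧸ I)] {e : ℕ}
    {s a b : MvPowerSeries (Fin n) K ⧸ I} (h : IsExactGorenstein e s a b)
    [IsArtinianRing (MvPowerSeries (Fin n) K ⧸ I)] (j : ℕ) :
    bettiQ I j = (bettiBounds e j).2 := by
  rw [bettiQ_eq_toNat_betti, h.betti_residueField, ENat.toNat_natCast]

lemma bettiQ_initialIdeal [IsLocalRing (MvPowerSeries (Fin n) K ⧸ I)] {e : ℕ}
    {s a b : MvPowerSeries (Fin n) K ⧸ I} (h : IsExactGorenstein e s a b)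
    (hm4 : mxR K n ^ 4 ≤ I) (j : ℕ) : bettiQ (initialIdeal I) j = (bettiBounds e j).2 := by
  have := isArtinianRing_quotient hm4
  have : Nontrivial (MvPowerSeries (Fin n) K ⧸ initialIdeal I) :=
    Ideal.Quotient.nontrivial_iff.mpr <| ne_top_of_le_ne_top (RingHom.ker_ne_top _) <|
      initialIdeal_le_mxR (le_mxR_of_isLocalRing I)
  have := isArtinianRing_quotient (pow_le_initialIdeal hm4)
  obtain ⟨q, hq, rfl⟩ := exists_mem_pow_mk_eq (I := I) (x := s) (d := 3) <|
    h.maximalIdeal_pow_three ▸ Ideal.mem_span_singleton_self s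
  obtain ⟨α, rfl⟩ := mk_surjective a
  obtain ⟨β, rfl⟩ := mk_surjective b
  exact bettiQ_eq_bettiBounds (isExactGorenstein_initialIdeal h hq) j

theorem poincare_series_rational_of_exact_zero_divisor_general
    (hm4 : mxR K n ^ 4 ≤ I) (hGor : socDimQ I = 1) (h1 : 3 ≤ hilbQ I 1)
    {a : MvPowerSeries (Fin n) K ⧸ I} (ha0 : a ≠ 0)
    (ham : a ∈ (mxR K n).map (mk I))
    (hexact : ∃ b : MvPowerSeries (Fin n) K ⧸ I,
      Submodule.colon (⊥ : Ideal (MvPowerSeries (Fin n) K ⧸ I)) (Ideal.span {a}) =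
        Ideal.span {b}) :
    isRationalSeries (PowerSeries.mk fun j => (bettiQ I j : ℚ)) ∧
      PowerSeries.mk (fun j => (bettiQ I j : ℚ)) =
        PowerSeries.mk (fun j => (bettiQ (initialIdeal I) j : ℚ)) := by
  have : Nontrivial (MvPowerSeries (Fin n) K ⧸ I) := ⟨a, 0, ha0⟩
  have := isArtinianRing_quotient hm4
  rw [map_mxR_eq_maximalIdeal] at ham
  obtain ⟨b, hab⟩ := hexact
  obtain ⟨e, s, h⟩ := exists_isExactGorenstein hm4 hGor h1 ha0 ham hab
  simp only [bettiQ_eq_bettiBounds h, bettiQ_initialIdeal h hm4]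
  exact ⟨isRationalSeries_bettiBounds e, trivial⟩

end PoincareSeries

/-- (Henriques–Şega.)  Let `A = R/I` be an Artinian Gorenstein local `K`-algebra
with `m^4 = 0` and `HF_A(1) = n ≥ 3` admitting an exact zero divisor (a nonzero
`a ∈ m` with `(0 : a)` principal).  Then the Poincaré series
`P^A_K(z) = Σ_j dim_K Tor_j^A(K,K) z^j` is rational, and it equals the Poincaré
series of the associated graded ring `gr_m(A) = R/I^*`. -/
theorem poincare_series_rational_of_exact_zero_divisor
    {K : Type*} [Field K] [IsAlgClosed K] [CharZero K] {n : ℕ} (hn : 3 ≤ n)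
    (I : Ideal (MvPowerSeries (Fin n) K))
    (h0 : hilbQ I 0 = 1) (h1 : hilbQ I 1 = n)
    (hm4 : mxR K n ^ 4 ≤ I) (hGor : socDimQ I = 1)
    (a : MvPowerSeries (Fin n) K ⧸ I) (ha0 : a ≠ 0)
    (ham : a ∈ (mxR K n).map (Ideal.Quotient.mk I))
    (hexact : ∃ b : MvPowerSeries (Fin n) K ⧸ I,
      Submodule.colon (⊥ : Ideal (MvPowerSeries (Fin n) K ⧸ I)) (Ideal.span {a}) =
        Ideal.span {b}) :
    isRationalSeries (PowerSeries.mk fun j => (bettiQ I j : ℚ)) ∧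
      PowerSeries.mk (fun j => (bettiQ I j : ℚ)) =
        PowerSeries.mk (fun j => (bettiQ (initialIdeal I) j : ℚ)) :=
  poincare_series_rational_of_exact_zero_divisor_general hm4 hGor (hn.trans_eq h1.symm) ha0 ham
    hexact
end
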